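/- Let Ψ be an immigration mechanism whose measure m satisfies ∫_𝕄 (z₁ + z₂) m(dz) < ∞, and let (P^γ_t)_{t≥0} be the corresponding transition probabilities with immigration. Then for all x, y ∈ 𝕄 and t ≥ 0: (i) every coupling Π of P^γ_t(x,·) and P^γ_t(y,·) satisfies ∫_{𝕄×𝕄}(|u₁−v₁|+|u₂−v₂|) Π(du,dv) ≥ |(x₁−y₁)π₁(t,1)+(x₂−y₂)π₂(t,1)|; and (ii) there exists a coupling Π of P^γ_t(x,·) and P^γ_t(y,·) with ∫_{𝕄×𝕄}(|u₁−v₁|+|u₂−v₂|) Π(du,dv) ≤ |x₁−y₁|π₁(t,1) + |x₂−y₂|π₂(t,1). -/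

import Mathlib

open MeasureTheory Filter Set

noncomputable section

/-- The state space `𝕄 = [0,∞) × ℕ`, as a subset of `ℝ²`. -/
def Mset : Set (ℝ × ℝ) := {z | 0 ≤ z.1 ∧ ∃ n : ℕ, z.2 = (n : ℝ)}

/-- The space `𝕄₋₁ = [0,∞) × (ℕ ∪ {-1})`, as a subset of `ℝ²`. -/
def Mm1set : Set (ℝ × ℝ) := {z | 0 ≤ z.1 ∧ ∃ n : ℤ, (-1 : ℤ) ≤ n ∧ z.2 = (n : ℝ)}

/-- The data of a branching mechanism `(Φ₁, Φ₂)` of a mixed state branching process. -/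
structure BranchingMechanism where
  a11 : ℝ
  a21 : ℝ
  alpha : ℝ
  a21_nonneg : 0 ≤ a21
  alpha_nonneg : 0 ≤ alpha
  n1 : Measure (ℝ × ℝ)
  n2 : Measure (ℝ × ℝ)
  n1_sigmaFinite : SigmaFinite n1
  n2_sigmaFinite : SigmaFinite n2
  /-- `n₁` is supported on `𝕄` -/
  n1_supp : n1 Msetᶜ = 0
  /-- `n₂` is supported on `𝕄₋₁` -/
  n2_supp : n2 Mm1setᶜ = 0
  /-- `n₁` does not charge the origin -/
  n1_zero : n1 {0} = 0
  /-- `n₂` does not charge the origin -/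
  n2_zero : n2 {0} = 0
  /-- `n₂([0,∞) × {-1}) < ∞` -/
  n2_neg1 : n2 {z : ℝ × ℝ | z.2 = -1} ≠ ⊤
  /-- `∫ (z₁ ∧ z₁² + z₂) n₁(dz) < ∞` -/
  n1_moment : ∫⁻ z, ENNReal.ofReal (min z.1 (z.1 ^ 2) + z.2) ∂n1 ≠ ⊤
  /-- `∫ (z₁ + |z₂|) n₂(dz) < ∞` -/
  n2_moment : ∫⁻ z, ENNReal.ofReal (z.1 + |z.2|) ∂n2 ≠ ⊤

/-- `Φ₁(λ) = -a₁₁λ₁ - αλ₁² - ∫ (e^{-⟨λ,z⟩} - 1 + λ₁z₁) n₁(dz)`. -/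
def mPhi1 (B : BranchingMechanism) (l : ℝ × ℝ) : ℝ :=
  -B.a11 * l.1 - B.alpha * l.1 ^ 2 -
    ∫ z, (Real.exp (-(l.1 * z.1 + l.2 * z.2)) - 1 + l.1 * z.1) ∂B.n1

/-- `Φ₂(λ) = a₂₁λ₁ + ∫ (1 - e^{-⟨λ,z⟩}) n₂(dz)`. -/
def mPhi2 (B : BranchingMechanism) (l : ℝ × ℝ) : ℝ :=
  B.a21 * l.1 + ∫ z, (1 - Real.exp (-(l.1 * z.1 + l.2 * z.2))) ∂B.n2


/-- `V : t ↦ V(t,λ)` is a continuous `[0,∞)²`-valued solution of the cumulant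
equations (3.8) with initial value `λ = l`. -/
def SolvesCumulant (B : BranchingMechanism) (l : ℝ × ℝ) (V : ℝ → ℝ × ℝ) : Prop :=
  ContinuousOn V (Ici 0) ∧
  (∀ t : ℝ, 0 ≤ t → 0 ≤ (V t).1 ∧ 0 ≤ (V t).2) ∧
  (∀ t : ℝ, 0 ≤ t →
    (V t).1 = l.1 + ∫ s in (0:ℝ)..t, mPhi1 B (V s) ∧
    (V t).2 = l.2 + ∫ s in (0:ℝ)..t, mPhi2 B (V s))

/-- `P` is the family of transition probabilities of the MSB-process with cumulant
`V`: each `P_t(x,·)` is a Borel probability measure on `𝕄` with Laplace transform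
`∫ e^{-⟨λ,y⟩} P_t(x,dy) = exp(-⟨x,V(t,λ)⟩)`. -/
def IsMSBTransition (V : ℝ → (ℝ × ℝ) → ℝ × ℝ)
    (P : ℝ → (ℝ × ℝ) → Measure (ℝ × ℝ)) : Prop :=
  ∀ t : ℝ, 0 ≤ t → ∀ x ∈ Mset,
    IsProbabilityMeasure (P t x) ∧ P t x Msetᶜ = 0 ∧
    ∀ l : ℝ × ℝ, 0 ≤ l.1 → 0 ≤ l.2 →
      ∫ y, Real.exp (-(l.1 * y.1 + l.2 * y.2)) ∂(P t x)
        = Real.exp (-(x.1 * (V t l).1 + x.2 * (V t l).2))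

/-- `π : t ↦ π(t,λ)` is a `[0,∞)²`-valued solution of the moment linear system
`dπ₁/dt = -a₁₁π₁ + π₂ ∫ z₂ n₁(dz)`,
`dπ₂/dt = a₂₁π₁ + ∫ (z₁π₁ + z₂π₂) n₂(dz)`, with `π(0,λ) = l`. -/
def SolvesMoment (B : BranchingMechanism) (l : ℝ × ℝ) (π : ℝ → ℝ × ℝ) : Prop :=
  π 0 = l ∧
  (∀ t : ℝ, 0 ≤ t → 0 ≤ (π t).1 ∧ 0 ≤ (π t).2) ∧
  (∀ t : ℝ, 0 ≤ t →
    HasDerivWithinAt (fun s => (π s).1)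
      (-B.a11 * (π t).1 + (π t).2 * ∫ z, z.2 ∂B.n1) (Ici 0) t ∧
    HasDerivWithinAt (fun s => (π s).2)
      (B.a21 * (π t).1 + ∫ z, (z.1 * (π t).1 + z.2 * (π t).2) ∂B.n2) (Ici 0) t)

/-- `Pc` is a coupling of the probability measures `μ` and `ν` on `ℝ²`. -/
def IsCoupling (Pc : Measure ((ℝ × ℝ) × (ℝ × ℝ))) (μ ν : Measure (ℝ × ℝ)) : Prop :=
  IsProbabilityMeasure Pc ∧ Pc.map Prod.fst = μ ∧ Pc.map Prod.snd = ν

/-- The immigration mechanism `Ψ(λ) = bλ₁ + ∫ (1 - e^{-⟨λ,z⟩}) m(dz)`. -/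
def mPsi (b : ℝ) (m : Measure (ℝ × ℝ)) (l : ℝ × ℝ) : ℝ :=
  b * l.1 + ∫ z, (1 - Real.exp (-(l.1 * z.1 + l.2 * z.2))) ∂m

/-- `m` is an admissible immigration measure: a σ-finite measure on `𝕄` not
charging the origin with `∫ (1∧z₁ + 1∧z₂) m(dz) < ∞`. -/
def IsImmigrationMeasure (m : Measure (ℝ × ℝ)) : Prop :=
  SigmaFinite m ∧ m Msetᶜ = 0 ∧ m {0} = 0 ∧
    ∫⁻ z, ENNReal.ofReal (min 1 z.1 + min 1 z.2) ∂m ≠ ⊤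

/-- `P` is the family of transition probabilities of the MSBI-process with
cumulant `V` and immigration mechanism `Ψ = mPsi b m`. -/
def IsMSBITransition (V : ℝ → (ℝ × ℝ) → ℝ × ℝ) (b : ℝ) (m : Measure (ℝ × ℝ))
    (P : ℝ → (ℝ × ℝ) → Measure (ℝ × ℝ)) : Prop :=
  ∀ t : ℝ, 0 ≤ t → ∀ x ∈ Mset,
    IsProbabilityMeasure (P t x) ∧ P t x Msetᶜ = 0 ∧
    ∀ l : ℝ × ℝ, 0 ≤ l.1 → 0 ≤ l.2 →
      ∫ y, Real.exp (-(l.1 * y.1 + l.2 * y.2)) ∂(P t x)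
        = Real.exp (-(x.1 * (V t l).1 + x.2 * (V t l).2)
            - ∫ s in (0:ℝ)..t, mPsi b m (V s l))



abbrev KK := unitInterval × unitInterval

def mon (l : NNReal × NNReal) : C(KK, ℝ) :=
  ⟨fun k => (k.1 : ℝ) ^ (l.1 : ℝ) * (k.2 : ℝ) ^ (l.2 : ℝ), by
    apply Continuous.mul
    · exact (Real.continuous_rpow_const l.1.2).comp (by fun_prop)
    · exact (Real.continuous_rpow_const l.2.2).comp (by fun_prop)⟩

lemma mon_apply (l : NNReal × NNReal) (k : KK) :
    mon l k = (k.1 : ℝ) ^ (l.1 : ℝ) * (k.2 : ℝ) ^ (l.2 : ℝ) := rfl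

lemma mon_mul (l : NNReal × NNReal) (k k' : KK) : mon l (k * k') = mon l k * mon l k' := by
  simp only [mon_apply, Prod.fst_mul, Prod.snd_mul, Set.Icc.coe_mul]
  rw [Real.mul_rpow k.1.2.1 k'.1.2.1, Real.mul_rpow k.2.2.1 k'.2.2.1]; ring

lemma mon_zero : mon 0 = 1 := by
  ext k; simp [mon_apply]

/-- positive definiteness -/
def PD (f : NNReal × NNReal → ℝ) : Prop :=
  ∀ c : (NNReal × NNReal) →₀ ℝ, (∀ k : KK, 0 ≤ c.sum (fun l a => a * mon l k)) →
    0 ≤ c.sum (fun l a => a * f l)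

lemma exists_measure_of_functional (g : C(KK, ℝ) →ₗ[ℝ] ℝ) (hg : ∀ x, 0 ≤ x → 0 ≤ g x) :
    ∃ μ : Measure KK, IsFiniteMeasure μ ∧ ∀ f : C(KK, ℝ), ∫ k, f k ∂μ = g f := by
  let e : CompactlySupportedContinuousMap KK ℝ →ₗ[ℝ] C(KK, ℝ) :=
    { toFun := fun f => f.toContinuousMap
      map_add' := fun _ _ => rfl
      map_smul' := fun _ _ => rfl }
  let L : CompactlySupportedContinuousMap KK ℝ →ₚ[ℝ] ℝ :=
    PositiveLinearMap.mk₀ (g ∘ₗ e) (by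
      intro f hf
      exact hg _ (fun k => hf k))
  refine ⟨RealRMK.rieszMeasure L, ?_, ?_⟩
  · have : IsFiniteMeasureOnCompacts (RealRMK.rieszMeasure L) := by
      unfold RealRMK.rieszMeasure; infer_instance
    exact ⟨isCompact_univ.measure_lt_top⟩
  · intro f
    have := RealRMK.integral_rieszMeasure L ⟨f, HasCompactSupport.of_compactSpace f⟩
    exact this

lemma PD.exists_measure {f : NNReal × NNReal → ℝ} (hf : PD f) :
    ∃ μ : Measure KK, IsFiniteMeasure μ ∧ ∀ l, ∫ k, mon l k ∂μ = f l := by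
  let T : ((NNReal × NNReal) →₀ ℝ) →ₗ[ℝ] C(KK, ℝ) := Finsupp.linearCombination ℝ mon
  let F : ((NNReal × NNReal) →₀ ℝ) →ₗ[ℝ] ℝ := Finsupp.linearCombination ℝ f
  have hT : ∀ c k, T c k = c.sum (fun l a => a * mon l k) := by
    intro c k
    simp only [T, Finsupp.linearCombination_apply, Finsupp.sum, ContinuousMap.coe_sum,
      Finset.sum_apply, ContinuousMap.coe_smul, Pi.smul_apply, smul_eq_mul]
  have hF : ∀ c, F c = c.sum (fun l a => a * f l) := by
    intro c
    simp only [F, Finsupp.linearCombination_apply, smul_eq_mul]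
  have hpos : ∀ c, 0 ≤ T c → 0 ≤ F c := by
    intro c hc; rw [hF]; apply hf; intro k; rw [← hT]; exact hc k
  have hker : ∀ c, T c = 0 → F c = 0 := by
    intro c hc
    apply le_antisymm
    · have := hpos (-c) (by rw [map_neg, hc, neg_zero])
      rw [map_neg] at this; linarith
    · exact hpos c hc.ge
  obtain ⟨s, hs⟩ := T.rangeRestrict.exists_rightInverse_of_surjective T.range_rangeRestrict
  have hs' : ∀ x : LinearMap.range T, T (s x) = x := by
    intro x
    have := congrArg (fun φ => φ x) hs
    exact congrArg Subtype.val this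
  let fp : C(KK, ℝ) →ₗ.[ℝ] ℝ := ⟨LinearMap.range T, F ∘ₗ s⟩
  let cone : PointedCone ℝ C(KK, ℝ) := PointedCone.positive ℝ C(KK, ℝ)
  obtain ⟨g, hg, hgpos⟩ := riesz_extension cone fp (by
      intro x hx
      apply hpos
      rw [hs']; exact hx) (by
      intro y
      obtain ⟨C, hC⟩ : ∃ C : ℝ, ∀ k, -C ≤ y k := ⟨‖y‖, fun k => by
        have := y.norm_coe_le_norm k
        rw [Real.norm_eq_abs] at this
        exact neg_le_of_abs_le this⟩
      refine ⟨⟨T (Finsupp.single 0 C), LinearMap.mem_range_self _ _⟩, ?_⟩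
      show (0 : C(KK, ℝ)) ≤ _
      intro k
      have := hT (Finsupp.single 0 C) k
      simp [mon_zero] at this
      simp [this]
      linarith [hC k])
  obtain ⟨μ, h1, h2⟩ := exists_measure_of_functional g (fun x hx => hgpos x hx)
  refine ⟨μ, h1, fun l => ?_⟩
  rw [h2]
  have hTl : T (Finsupp.single l 1) = mon l := by simp [T]
  have hFl : F (Finsupp.single l 1) = f l := by simp [F]
  have := hg ⟨T (Finsupp.single l 1), LinearMap.mem_range_self _ _⟩
  simp only [hTl] at this
  rw [this, ← hFl]
  show F (s _) = _
  rw [← sub_eq_zero, ← map_sub]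
  apply hker
  rw [map_sub, hs']
  exact sub_eq_zero.2 hTl.symm

lemma mon_integrable (μ : Measure KK) [IsFiniteMeasure μ] (f : C(KK, ℝ)) :
    Integrable (fun k => f k) μ :=
  (BoundedContinuousFunction.mkOfCompact f).integrable μ

lemma PD.add {f g} (hf : PD f) (hg : PD g) : PD (fun l => f l + g l) := by
  intro c hc
  have := add_nonneg (hf c hc) (hg c hc)
  simpa [Finsupp.sum, mul_add, Finset.sum_add_distrib] using this

lemma PD.smul {f} (hf : PD f) {a : ℝ} (ha : 0 ≤ a) : PD (fun l => a * f l) := by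
  intro c hc
  have := mul_nonneg ha (hf c hc)
  simp only [Finsupp.sum, Finset.mul_sum] at this ⊢
  rw [Finset.sum_congr rfl (fun l _ => (mul_left_comm (c l) a (f l)))]
  exact this

lemma PD.limit {f : ℕ → NNReal × NNReal → ℝ} {g} (hf : ∀ n, PD (f n))
    (h : ∀ l, Tendsto (fun n => f n l) atTop (nhds (g l))) : PD g := by
  intro c hc
  refine ge_of_tendsto' (b := 0) (f := fun n => c.sum (fun l a => a * f n l)) (x := atTop) ?_
    (fun n => hf n c hc)
  simp only [Finsupp.sum]
  exact tendsto_finsetSum _ (fun l _ => (h l).const_mul _)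

lemma PD.integral {α} [MeasurableSpace α] {μ : Measure α} {f : α → NNReal × NNReal → ℝ}
    (hf : ∀ᵐ z ∂μ, PD (f z)) (hi : ∀ l, Integrable (fun z => f z l) μ) :
    PD (fun l => ∫ z, f z l ∂μ) := by
  intro c hc
  have : c.sum (fun l a => a * ∫ z, f z l ∂μ) = ∫ z, c.sum (fun l a => a * f z l) ∂μ := by
    simp only [Finsupp.sum]
    rw [integral_finsetSum]
    · simp only [integral_const_mul]
    · intro l _; exact (hi l).const_mul _
  rw [this]
  apply integral_nonneg_of_ae
  filter_upwards [hf] with z hz using hz c hc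

lemma PD.mon (k : KK) : PD (fun l => mon l k) := fun _ hc => hc k

lemma PD.one : PD (fun _ => 1) := by
  convert PD.mon (1, 1) using 2
  simp [mon_apply]

lemma PD.mul {f g} (hf : PD f) (hg : PD g) : PD (fun l => f l * g l) := by
  obtain ⟨ν, hν, hg⟩ := hg.exists_measure
  simp only [← hg, ← integral_const_mul]
  refine PD.integral (ae_of_all _ fun k => ?_) (fun l => (mon_integrable ν _).const_mul _)
  intro c hc
  have := hf (c.mapRange id rfl |>.zipWith (fun a b => a * b) (by simp)
    (Finsupp.onFinset c.support (fun l => if l ∈ c.support then _root_.mon l k else 0)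
      (by intro l; simp; tauto))) ?_
  · rw [Finsupp.sum_of_support_subset (s := c.support)] at this
    · convert this using 1
      apply Finset.sum_congr rfl
      intro l hl
      simp at hl
      simp [hl]; ring
    · intro l; simp; tauto
    · simp
  · intro k'
    rw [Finsupp.sum_of_support_subset (s := c.support)]
    · convert hc (k * k') using 1
      apply Finset.sum_congr rfl
      intro l hl
      simp at hl
      simp [hl, mon_mul]; ring
    · intro l; simp; tauto
    · simp

lemma PD.pow {f} (hf : PD f) (n : ℕ) : PD (fun l => f l ^ n) := by
  induction n with
  | zero => simpa using PD.one
  | succ n ih => simpa [pow_succ] using ih.mul hf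

lemma PD.exp {f} (hf : PD f) : PD (fun l => Real.exp (f l)) := by
  refine PD.limit (f := fun n l => ∑ i ∈ Finset.range n, f l ^ i / (i.factorial : ℝ)) ?_ ?_
  · intro n
    induction n with
    | zero => intro c _; simp
    | succ n ih =>
      simp only [Finset.sum_range_succ]
      refine ih.add ?_
      have := (hf.pow n).smul (a := ((n.factorial : ℝ))⁻¹) (by positivity)
      convert this using 2; ring
  · intro l
    have := (NormedSpace.expSeries_div_hasSum_exp (f l)).tendsto_sum_nat
    rwa [← Real.exp_eq_exp_ℝ] at this


def gz (z p : ℝ × ℝ) : ℝ := 1 - z.1 * p.1 - Real.exp (-(p.1 * z.1)) * p.2 ^ z.2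
def qz (z p : ℝ × ℝ) : ℝ := Real.exp (-(p.1 * z.1)) * p.2 ^ (z.2 + 1) - p.2

lemma measurable_gz (p : ℝ × ℝ) : Measurable (fun z => gz z p) := by
  unfold gz; fun_prop
lemma measurable_qz (p : ℝ × ℝ) : Measurable (fun z => qz z p) := by
  unfold qz; fun_prop

def D1 (a : ℝ) (ν : Measure (ℝ × ℝ)) (p : ℝ × ℝ) : ℝ := -a * p.1 + ∫ z, gz z p ∂ν
def D2 (ν : Measure (ℝ × ℝ)) (p : ℝ × ℝ) : ℝ := ∫ z, qz z p ∂ν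

def estep (a h : ℝ) (ν1 ν2 : Measure (ℝ × ℝ)) (p : ℝ × ℝ) : ℝ × ℝ :=
  (p.1 + h * D1 a ν1 p, p.2 + h * D2 ν2 p)

structure Good (p : NNReal × NNReal → ℝ × ℝ) : Prop where
  n1 : ∀ l, 0 ≤ (p l).1
  n2 : ∀ l, 0 ≤ (p l).2
  l2 : ∀ l, (p l).2 ≤ 1
  e1 : ∀ c : ℝ, 0 ≤ c → PD (fun l => Real.exp (-(c * (p l).1)))
  e2 : PD (fun l => (p l).2)

lemma good_step {a h : ℝ} {ν1 ν2 : Measure (ℝ × ℝ)} [IsFiniteMeasure ν1] [IsFiniteMeasure ν2]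
    (hs1 : ∀ᵐ z ∂ν1, z ∈ Mset) (hs2 : ∀ᵐ z ∂ν2, z ∈ Mm1set)
    (hi : Integrable (fun z => z.1) ν1) (hh : 0 ≤ h)
    (h1 : h * (a + ∫ z, z.1 ∂ν1) ≤ 1) (h2 : h * ν2.real univ ≤ 1)
    {p : NNReal × NNReal → ℝ × ℝ} (hp : Good p) :
    Good (fun l => estep a h ν1 ν2 (p l)) := by
  -- integrability
  have b1 : ∀ l, ∀ᵐ z ∂ν1, 0 ≤ Real.exp (-((p l).1 * z.1)) * (p l).2 ^ z.2 ∧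
      Real.exp (-((p l).1 * z.1)) * (p l).2 ^ z.2 ≤ 1 := by
    intro l
    filter_upwards [hs1] with z hz
    obtain ⟨hz1, n, hn⟩ := hz
    have A : Real.exp (-((p l).1 * z.1)) ≤ 1 := by
      rw [Real.exp_le_one_iff]; have := mul_nonneg (hp.n1 l) hz1; linarith
    have Bb : (p l).2 ^ z.2 ≤ 1 := by
      rw [hn, Real.rpow_natCast]; exact pow_le_one₀ (hp.n2 l) (hp.l2 l)
    have Cc : 0 ≤ (p l).2 ^ z.2 := Real.rpow_nonneg (hp.n2 l) _
    exact ⟨by positivity, mul_le_one₀ A Cc Bb⟩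
  have b2 : ∀ l, ∀ᵐ z ∂ν2, 0 ≤ Real.exp (-((p l).1 * z.1)) * (p l).2 ^ (z.2 + 1) ∧
      Real.exp (-((p l).1 * z.1)) * (p l).2 ^ (z.2 + 1) ≤ 1 := by
    intro l
    filter_upwards [hs2] with z hz
    obtain ⟨hz1, n, hn0, hn⟩ := hz
    have A : Real.exp (-((p l).1 * z.1)) ≤ 1 := by
      rw [Real.exp_le_one_iff]; have := mul_nonneg (hp.n1 l) hz1; linarith
    have Bb : (p l).2 ^ (z.2 + 1) ≤ 1 := by
      apply Real.rpow_le_one (hp.n2 l) (hp.l2 l)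
      rw [hn]; exact_mod_cast by omega
    have Cc : 0 ≤ (p l).2 ^ (z.2 + 1) := Real.rpow_nonneg (hp.n2 l) _
    exact ⟨by positivity, mul_le_one₀ A Cc Bb⟩
  have i1 : ∀ l, Integrable (fun z : ℝ × ℝ => Real.exp (-((p l).1 * z.1)) * (p l).2 ^ z.2) ν1 := by
    intro l
    refine (integrable_const (1:ℝ)).mono' (by fun_prop) ?_
    filter_upwards [b1 l] with z hz
    rw [Real.norm_eq_abs, abs_of_nonneg hz.1]; exact hz.2
  have i2 : ∀ l, Integrable
      (fun z : ℝ × ℝ => Real.exp (-((p l).1 * z.1)) * (p l).2 ^ (z.2 + 1)) ν2 := by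
    intro l
    refine (integrable_const (1:ℝ)).mono' (by fun_prop) ?_
    filter_upwards [b2 l] with z hz
    rw [Real.norm_eq_abs, abs_of_nonneg hz.1]; exact hz.2
  have s1 : ∀ l, (estep a h ν1 ν2 (p l)).1 = (1 - h * (a + ∫ z, z.1 ∂ν1)) * (p l).1
      + h * (ν1.real univ - ∫ z, Real.exp (-((p l).1 * z.1)) * (p l).2 ^ z.2 ∂ν1) := by
    intro l
    simp only [estep, D1, gz]
    rw [integral_sub (by exact (integrable_const _).sub (hi.mul_const _)) (i1 l),
      integral_sub (integrable_const _) (hi.mul_const _), integral_mul_const]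
    simp
    ring
  have s2 : ∀ l, (estep a h ν1 ν2 (p l)).2 = (1 - h * ν2.real univ) * (p l).2
      + h * ∫ z, Real.exp (-((p l).1 * z.1)) * (p l).2 ^ (z.2 + 1) ∂ν2 := by
    intro l
    simp only [estep, D2, qz]
    rw [integral_sub (i2 l) (integrable_const _)]
    simp
    ring
  have t1 : ∀ l, ∫ z, Real.exp (-((p l).1 * z.1)) * (p l).2 ^ z.2 ∂ν1 ≤ ν1.real univ := by
    intro l
    have := integral_mono_ae (i1 l) (integrable_const (1:ℝ))
      (by filter_upwards [b1 l] with z hz using hz.2)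
    simpa using this
  have t2 : ∀ l, ∫ z, Real.exp (-((p l).1 * z.1)) * (p l).2 ^ (z.2 + 1) ∂ν2 ≤ ν2.real univ := by
    intro l
    have := integral_mono_ae (i2 l) (integrable_const (1:ℝ))
      (by filter_upwards [b2 l] with z hz using hz.2)
    simpa using this
  have t2' : ∀ l, 0 ≤ ∫ z, Real.exp (-((p l).1 * z.1)) * (p l).2 ^ (z.2 + 1) ∂ν2 := by
    intro l
    apply integral_nonneg_of_ae
    filter_upwards [b2 l] with z hz using hz.1
  refine ⟨?_, ?_, ?_, ?_, ?_⟩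
  · intro l; rw [s1]
    have := mul_nonneg (sub_nonneg.2 h1) (hp.n1 l)
    have := mul_nonneg hh (sub_nonneg.2 (t1 l))
    linarith
  · intro l; rw [s2]
    have := mul_nonneg (sub_nonneg.2 h2) (hp.n2 l)
    have := mul_nonneg hh (t2' l)
    linarith
  · intro l; rw [s2]
    have := mul_le_mul_of_nonneg_left (hp.l2 l) (sub_nonneg.2 h2)
    have := mul_le_mul_of_nonneg_left (t2 l) hh
    linarith
  · intro c hc
    have A := hp.e1 (c * (1 - h * (a + ∫ z, z.1 ∂ν1))) (mul_nonneg hc (sub_nonneg.2 h1))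
    have Bb : PD (fun l => ∫ z, Real.exp (-((p l).1 * z.1)) * (p l).2 ^ z.2 ∂ν1) := by
      refine PD.integral ?_ i1
      filter_upwards [hs1] with z hz
      obtain ⟨hz1, n, hn⟩ := hz
      simp only [hn, Real.rpow_natCast]
      refine PD.mul ?_ (hp.e2.pow n)
      simpa [mul_comm] using hp.e1 z.1 hz1
    have Cc := (A.mul (Bb.smul (mul_nonneg hc hh)).exp).smul
      (Real.exp_nonneg (-(c * h * ν1.real univ)))
    convert Cc using 2 with l
    rw [s1, ← Real.exp_add, ← Real.exp_add]
    congr 1; ring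
  · simp only [s2]
    refine (hp.e2.smul (sub_nonneg.2 h2)).add (PD.smul ?_ hh)
    refine PD.integral ?_ i2
    filter_upwards [hs2] with z hz
    obtain ⟨hz1, n, hn0, hn⟩ := hz
    obtain ⟨k, hk⟩ := Int.eq_ofNat_of_zero_le (show 0 ≤ n + 1 by omega)
    have : z.2 + 1 = (k : ℝ) := by rw [hn]; exact_mod_cast hk
    simp only [this, Real.rpow_natCast]
    refine PD.mul ?_ (hp.e2.pow k)
    simpa [mul_comm] using hp.e1 z.1 hz1

lemma good_init : Good (fun l => ((l.1 : ℝ), Real.exp (-(l.2 : ℝ)))) := by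
  refine ⟨fun l => l.1.2, fun l => Real.exp_nonneg _, fun l => ?_, fun c hc => ?_, ?_⟩
  · rw [Real.exp_le_one_iff]; simp
  · convert PD.mon (⟨Real.exp (-c), Real.exp_nonneg _, by simpa using hc⟩, 1) using 2 with l
    simp [mon_apply, ← Real.exp_mul]
  · convert PD.mon (1, ⟨Real.exp (-1), Real.exp_nonneg _, by simp⟩) using 2 with l
    simp [mon_apply, ← Real.exp_mul]


def w1 (z : ℝ × ℝ) : ℝ := min z.1 (z.1 ^ 2) + z.2
def w2 (z : ℝ × ℝ) : ℝ := z.1 + |z.2|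
def dd (p p' : ℝ × ℝ) : ℝ := |p.1 - p'.1| + |p.2 - p'.2|
def Reg (R : ℝ) (p : ℝ × ℝ) : Prop := 0 ≤ p.1 ∧ p.1 ≤ R ∧ 0 ≤ p.2 ∧ p.2 ≤ 1

lemma dd_nonneg (p p' : ℝ × ℝ) : 0 ≤ dd p p' := by unfold dd; positivity

lemma w1_nonneg {z : ℝ × ℝ} (hz : z ∈ Mset) : 0 ≤ w1 z := by
  obtain ⟨h, n, hn⟩ := hz
  unfold w1; rw [hn]
  have : 0 ≤ min z.1 (z.1^2) := le_min h (by positivity)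
  positivity

lemma w2_nonneg {z : ℝ × ℝ} (hz : z ∈ Mm1set) : 0 ≤ w2 z := by
  have := hz.1
  unfold w2; positivity

lemma abs_pow_sub_le {F G : ℝ} (hF : 0 ≤ F) (hF1 : F ≤ 1) (hG : 0 ≤ G) (hG1 : G ≤ 1) (n : ℕ) :
    |F ^ n - G ^ n| ≤ n * |F - G| := by
  induction n with
  | zero => simp
  | succ n ih =>
    have e : F ^ (n+1) - G ^ (n+1) = F * (F ^ n - G ^ n) + (F - G) * G ^ n := by ring
    rw [e]
    refine (abs_add_le _ _).trans ?_
    rw [abs_mul, abs_mul, abs_of_nonneg hF, abs_of_nonneg (pow_nonneg hG n)]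
    have h1 : F * |F ^ n - G ^ n| ≤ 1 * |F ^ n - G ^ n| :=
      mul_le_mul_of_nonneg_right hF1 (abs_nonneg _)
    have h2 : |F - G| * G ^ n ≤ |F - G| * 1 :=
      mul_le_mul_of_nonneg_left (pow_le_one₀ hG hG1) (abs_nonneg _)
    push_cast; linarith

lemma exp_aux1 {a b : ℝ} (hb : 0 ≤ b) (hab : b ≤ a) :
    0 ≤ Real.exp (-b) - Real.exp (-a) ∧ Real.exp (-b) - Real.exp (-a) ≤ a - b := by
  constructor
  · have := Real.exp_le_exp.2 (neg_le_neg hab); linarith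
  · have h := Real.add_one_le_exp (b - a)
    have e : Real.exp (-a) = Real.exp (-b) * Real.exp (b - a) := by
      rw [← Real.exp_add]; congr 1; ring
    have h1 : Real.exp (-b) ≤ 1 := by rw [Real.exp_le_one_iff]; linarith
    have h0 := Real.exp_pos (-b)
    rw [e]
    nlinarith

lemma exp_aux2 {a b R : ℝ} (haR : a ≤ R) (hab : b ≤ a) :
    a - b - (Real.exp (-b) - Real.exp (-a)) ≤ R * (a - b) := by
  have h := Real.add_one_le_exp (a - b)
  have e : Real.exp (-b) = Real.exp (-a) * Real.exp (a - b) := by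
    rw [← Real.exp_add]; congr 1; ring
  have h1 := Real.add_one_le_exp (-a)
  have h0 := Real.exp_pos (-a)
  have : Real.exp (-a) * (a - b) ≤ Real.exp (-b) - Real.exp (-a) := by rw [e]; nlinarith
  nlinarith

lemma exp_sub_abs {a b : ℝ} (ha : 0 ≤ a) (hb : 0 ≤ b) :
    |Real.exp (-a) - Real.exp (-b)| ≤ |a - b| := by
  rcases le_total b a with h | h
  · have := exp_aux1 hb h
    rw [abs_sub_comm, abs_of_nonneg this.1, abs_of_nonneg (by linarith)]; exact this.2
  · have := exp_aux1 ha h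
    rw [abs_of_nonneg this.1, abs_sub_comm, abs_of_nonneg (by linarith)]; exact this.2

lemma lin_exp_abs1 {a b F : ℝ} (ha : 0 ≤ a) (hb : 0 ≤ b) (hF : 0 ≤ F) (hF1 : F ≤ 1) :
    |(a - b) + (Real.exp (-a) - Real.exp (-b)) * F| ≤ |a - b| := by
  rcases le_total b a with h | h
  · have := exp_aux1 hb h
    rw [abs_of_nonneg (a := a - b) (by linarith), abs_le]
    constructor <;> nlinarith [mul_nonneg this.1 hF]
  · have := exp_aux1 ha h
    rw [abs_of_nonpos (a := a - b) (by linarith), abs_le]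
    constructor <;> nlinarith [mul_nonneg this.1 hF]

lemma lin_exp_abs2 {a b R : ℝ} (ha : 0 ≤ a) (hb : 0 ≤ b) (haR : a ≤ R) (hbR : b ≤ R) :
    |(a - b) + (Real.exp (-a) - Real.exp (-b))| ≤ R * |a - b| := by
  rcases le_total b a with h | h
  · have h1 := exp_aux1 hb h
    have h2 := exp_aux2 haR h
    rw [abs_of_nonneg (a := a - b) (by linarith), abs_le]
    constructor <;> nlinarith
  · have h1 := exp_aux1 ha h
    have h2 := exp_aux2 hbR h
    rw [abs_of_nonpos (a := a - b) (by linarith), abs_le]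
    constructor <;> nlinarith

lemma gz_lip {R : ℝ} {z p p' : ℝ × ℝ} (hz : z ∈ Mset) (hp : Reg R p) (hp' : Reg R p') :
    |gz z p - gz z p'| ≤ (1 + R) * w1 z * dd p p' := by
  have hw := w1_nonneg hz
  obtain ⟨hz1, n, hn⟩ := hz
  obtain ⟨a1, a2, a3, a4⟩ := hp
  obtain ⟨b1, b2, b3, b4⟩ := hp'
  have hR : 0 ≤ R := a1.trans a2
  have A0 : 0 ≤ p.1 * z.1 := by positivity
  have B0 : 0 ≤ p'.1 * z.1 := by positivity
  have hF0 : 0 ≤ p.2 ^ n := by positivity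
  have hF1 : p.2 ^ n ≤ 1 := pow_le_one₀ a3 a4
  have e : gz z p - gz z p' = -((p.1 * z.1 - p'.1 * z.1) +
      (Real.exp (-(p.1 * z.1)) - Real.exp (-(p'.1 * z.1))) * p.2 ^ n) +
      -(Real.exp (-(p'.1 * z.1)) * (p.2 ^ n - p'.2 ^ n)) := by
    simp only [gz, hn, Real.rpow_natCast]; ring
  have hE1 : Real.exp (-(p'.1 * z.1)) ≤ 1 := by rw [Real.exp_le_one_iff]; linarith
  have hE0 := Real.exp_pos (-(p'.1 * z.1))
  have hm0 : 0 ≤ min z.1 (z.1 ^ 2) := le_min hz1 (by positivity)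
  have X2 : |Real.exp (-(p'.1 * z.1)) * (p.2 ^ n - p'.2 ^ n)| ≤ (1 + R) * w1 z * |p.2 - p'.2| := by
    rw [abs_mul, abs_of_pos hE0]
    have := abs_pow_sub_le a3 a4 b3 b4 n
    have h2 : Real.exp (-(p'.1 * z.1)) * |p.2 ^ n - p'.2 ^ n| ≤ 1 * |p.2 ^ n - p'.2 ^ n| :=
      mul_le_mul_of_nonneg_right hE1 (abs_nonneg _)
    have h3 : (n : ℝ) ≤ (1 + R) * w1 z := by
      have : (n : ℝ) ≤ w1 z := by unfold w1; rw [hn]; linarith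
      nlinarith
    have h4 := mul_le_mul_of_nonneg_right h3 (abs_nonneg (p.2 - p'.2))
    linarith
  have X1 : |(p.1 * z.1 - p'.1 * z.1) +
      (Real.exp (-(p.1 * z.1)) - Real.exp (-(p'.1 * z.1))) * p.2 ^ n| ≤
      (1 + R) * w1 z * |p.1 - p'.1| := by
    have eab : |p.1 * z.1 - p'.1 * z.1| = z.1 * |p.1 - p'.1| := by
      rw [← sub_mul, abs_mul, abs_of_nonneg hz1, mul_comm]
    have Y1 := lin_exp_abs1 A0 B0 hF0 hF1
    rw [eab] at Y1
    have key : ∀ c, c ≤ (1 + R) * w1 z → c * |p.1 - p'.1| ≤ (1 + R) * w1 z * |p.1 - p'.1| :=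
      fun c hc => mul_le_mul_of_nonneg_right hc (abs_nonneg _)
    rcases Nat.eq_zero_or_pos n with h0 | h0
    · subst h0
      have hw' : w1 z = min z.1 (z.1 ^ 2) := by unfold w1; rw [hn]; simp
      rcases le_total z.1 1 with h1 | h1
      · have Y2 := lin_exp_abs2 (R := R * z.1) A0 B0 (mul_le_mul_of_nonneg_right a2 hz1)
          (mul_le_mul_of_nonneg_right b2 hz1)
        rw [eab, ← mul_assoc] at Y2
        simp only [pow_zero, mul_one]
        refine Y2.trans (key _ ?_)
        rw [hw', min_eq_right (by nlinarith)]
        nlinarith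
      · refine Y1.trans (key _ ?_)
        rw [hw', min_eq_left (by nlinarith)]
        nlinarith
    · refine Y1.trans (key _ ?_)
      have : (1 : ℝ) ≤ n := by exact_mod_cast h0
      have : z.1 ≤ w1 z := by
        unfold w1; rw [hn]
        rcases le_total z.1 1 with h1 | h1
        · linarith
        · rw [min_eq_left (by nlinarith)]; linarith
      nlinarith
  rw [e]
  refine (abs_add_le _ _).trans ?_
  rw [abs_neg, abs_neg, dd, mul_add]
  exact add_le_add X1 X2

lemma qz_lip {R : ℝ} {z p p' : ℝ × ℝ} (hz : z ∈ Mm1set) (hp : Reg R p) (hp' : Reg R p') :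
    |qz z p - qz z p'| ≤ (3 + R) * w2 z * dd p p' := by
  have hw := w2_nonneg hz
  obtain ⟨hz1, n', hn', hn⟩ := hz
  obtain ⟨a1, a2, a3, a4⟩ := hp
  obtain ⟨b1, b2, b3, b4⟩ := hp'
  obtain ⟨k, hk⟩ := Int.eq_ofNat_of_zero_le (show 0 ≤ n' + 1 by omega)
  have hk' : z.2 + 1 = (k : ℝ) := by rw [hn]; exact_mod_cast hk
  have hR : 0 ≤ R := a1.trans a2
  have A0 : 0 ≤ p.1 * z.1 := by positivity
  have B0 : 0 ≤ p'.1 * z.1 := by positivity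
  have hF0 : 0 ≤ p.2 ^ k := by positivity
  have hF1 : p.2 ^ k ≤ 1 := pow_le_one₀ a3 a4
  have e : qz z p - qz z p' = 
      (Real.exp (-(p.1 * z.1)) - Real.exp (-(p'.1 * z.1))) * p.2 ^ k +
      (Real.exp (-(p'.1 * z.1)) * (p.2 ^ k - p'.2 ^ k) - (p.2 - p'.2)) := by
    simp only [qz, hk', Real.rpow_natCast]; ring
  have hE1 : Real.exp (-(p'.1 * z.1)) ≤ 1 := by rw [Real.exp_le_one_iff]; linarith
  have hE0 := Real.exp_pos (-(p'.1 * z.1))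
  have key : ∀ c x : ℝ, c ≤ (3 + R) * w2 z → c * |x| ≤ (3 + R) * w2 z * |x| :=
      fun c x hc => mul_le_mul_of_nonneg_right hc (abs_nonneg _)
  have hz1w : z.1 ≤ w2 z := by unfold w2; linarith [abs_nonneg z.2]
  have hz2w : |z.2| ≤ w2 z := by unfold w2; linarith
  have X1 : |(Real.exp (-(p.1 * z.1)) - Real.exp (-(p'.1 * z.1))) * p.2 ^ k| ≤
      (3 + R) * w2 z * |p.1 - p'.1| := by
    have eab : |p.1 * z.1 - p'.1 * z.1| = z.1 * |p.1 - p'.1| := by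
      rw [← sub_mul, abs_mul, abs_of_nonneg hz1, mul_comm]
    have Y1 := exp_sub_abs A0 B0
    rw [eab] at Y1
    rw [abs_mul, abs_of_nonneg hF0]
    refine (mul_le_of_le_one_right (abs_nonneg _) hF1).trans (Y1.trans (key _ _ ?_))
    nlinarith
  have X2 : |Real.exp (-(p'.1 * z.1)) * (p.2 ^ k - p'.2 ^ k) - (p.2 - p'.2)| ≤
      (3 + R) * w2 z * |p.2 - p'.2| := by
    by_cases h1 : k = 1
    · subst h1
      have : Real.exp (-(p'.1 * z.1)) * (p.2 ^ 1 - p'.2 ^ 1) - (p.2 - p'.2) =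
        (Real.exp (-(p'.1 * z.1)) - 1) * (p.2 - p'.2) := by ring
      rw [this, abs_mul]
      refine key _ _ ?_
      have h3 := Real.add_one_le_exp (-(p'.1 * z.1))
      rw [abs_of_nonpos (by linarith)]
      have : p'.1 * z.1 ≤ R * w2 z := mul_le_mul b2 hz1w hz1 hR
      linarith
    · have h2 : (k : ℝ) + 1 ≤ 3 * |z.2| := by
        have : z.2 = (k:ℝ) - 1 := by linarith
        rw [this]
        rcases Nat.lt_or_ge k 1 with h | h
        · have : k = 0 := by omega
          subst this; norm_num
        · have : (2 : ℝ) ≤ k := by exact_mod_cast (show 2 ≤ k by omega)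
          rw [abs_of_nonneg (by linarith)]; linarith
      have h3 := abs_pow_sub_le a3 a4 b3 b4 k
      have h4 : Real.exp (-(p'.1 * z.1)) * |p.2 ^ k - p'.2 ^ k| ≤ 1 * |p.2 ^ k - p'.2 ^ k| :=
        mul_le_mul_of_nonneg_right hE1 (abs_nonneg _)
      refine (abs_sub _ _).trans ?_
      rw [abs_mul, abs_of_pos hE0]
      have := key (k + 1) (p.2 - p'.2) (by nlinarith)
      linarith
  rw [e]
  refine (abs_add_le _ _).trans ?_
  rw [dd, mul_add]
  exact add_le_add X1 X2

lemma gz_zero (z : ℝ × ℝ) : gz z (0, 1) = 0 := by simp [gz]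
lemma qz_zero (z : ℝ × ℝ) : qz z (0, 1) = 0 := by simp [qz]
lemma reg_zero {R : ℝ} (hR : 0 ≤ R) : Reg R (0, 1) := by simp [Reg, hR]

lemma dd_zero_le {R : ℝ} {p} (hp : Reg R p) : dd p (0, 1) ≤ R + 1 := by
  obtain ⟨a1, a2, a3, a4⟩ := hp
  simp only [dd, sub_zero]
  rw [abs_of_nonneg a1, abs_of_nonpos (by linarith)]; linarith

lemma gz_bd {R : ℝ} {z p : ℝ × ℝ} (hz : z ∈ Mset) (hp : Reg R p) :
    |gz z p| ≤ (1 + R) * (R + 1) * w1 z := by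
  have hR : 0 ≤ R := hp.1.trans hp.2.1
  have h := gz_lip hz hp (reg_zero hR)
  rw [gz_zero, sub_zero] at h
  have := mul_le_mul_of_nonneg_left (dd_zero_le hp)
    (mul_nonneg (by linarith : (0:ℝ) ≤ 1 + R) (w1_nonneg hz))
  linarith

lemma qz_bd {R : ℝ} {z p : ℝ × ℝ} (hz : z ∈ Mm1set) (hp : Reg R p) :
    |qz z p| ≤ (3 + R) * (R + 1) * w2 z := by
  have hR : 0 ≤ R := hp.1.trans hp.2.1
  have h := qz_lip hz hp (reg_zero hR)
  rw [qz_zero, sub_zero] at h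
  have := mul_le_mul_of_nonneg_left (dd_zero_le hp)
    (mul_nonneg (by linarith : (0:ℝ) ≤ 3 + R) (w2_nonneg hz))
  linarith

lemma gz_int {R : ℝ} {p : ℝ × ℝ} {ν : Measure (ℝ × ℝ)} (hs : ∀ᵐ z ∂ν, z ∈ Mset)
    (hi : Integrable w1 ν) (hp : Reg R p) : Integrable (fun z => gz z p) ν := by
  refine (hi.const_mul ((1 + R) * (R + 1))).mono' (measurable_gz p).aestronglyMeasurable ?_
  filter_upwards [hs] with z hz using gz_bd hz hp

lemma qz_int {R : ℝ} {p : ℝ × ℝ} {ν : Measure (ℝ × ℝ)} (hs : ∀ᵐ z ∂ν, z ∈ Mm1set)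
    (hi : Integrable w2 ν) (hp : Reg R p) : Integrable (fun z => qz z p) ν := by
  refine (hi.const_mul ((3 + R) * (R + 1))).mono' (measurable_qz p).aestronglyMeasurable ?_
  filter_upwards [hs] with z hz using qz_bd hz hp

lemma igz_lip {R : ℝ} {p p' : ℝ × ℝ} {ν : Measure (ℝ × ℝ)} (hs : ∀ᵐ z ∂ν, z ∈ Mset)
    (hi : Integrable w1 ν) (hp : Reg R p) (hp' : Reg R p') :
    |∫ z, gz z p ∂ν - ∫ z, gz z p' ∂ν| ≤ (1 + R) * (∫ z, w1 z ∂ν) * dd p p' := by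
  rw [← integral_sub (gz_int hs hi hp) (gz_int hs hi hp')]
  have := norm_integral_le_of_norm_le (f := fun z => gz z p - gz z p')
    (g := fun z => (1 + R) * w1 z * dd p p') ((hi.const_mul (1+R)).mul_const (dd p p')) (by
      filter_upwards [hs] with z hz using gz_lip hz hp hp')
  rw [integral_mul_const, integral_const_mul] at this
  exact this

lemma iqz_lip {R : ℝ} {p p' : ℝ × ℝ} {ν : Measure (ℝ × ℝ)} (hs : ∀ᵐ z ∂ν, z ∈ Mm1set)
    (hi : Integrable w2 ν) (hp : Reg R p) (hp' : Reg R p') :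
    |∫ z, qz z p ∂ν - ∫ z, qz z p' ∂ν| ≤ (3 + R) * (∫ z, w2 z ∂ν) * dd p p' := by
  rw [← integral_sub (qz_int hs hi hp) (qz_int hs hi hp')]
  have := norm_integral_le_of_norm_le (f := fun z => qz z p - qz z p')
    (g := fun z => (3 + R) * w2 z * dd p p') ((hi.const_mul (3+R)).mul_const (dd p p')) (by
      filter_upwards [hs] with z hz using qz_lip hz hp hp')
  rw [integral_mul_const, integral_const_mul] at this
  exact this


lemma n1_ae (B : BranchingMechanism) : ∀ᵐ z ∂B.n1, z ∈ Mset := by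
  rw [ae_iff]; exact B.n1_supp
lemma n2_ae (B : BranchingMechanism) : ∀ᵐ z ∂B.n2, z ∈ Mm1set := by
  rw [ae_iff]; exact B.n2_supp

lemma measurable_w1 : Measurable w1 := by unfold w1; fun_prop
lemma measurable_w2 : Measurable w2 := by unfold w2; fun_prop

lemma w1_int (B : BranchingMechanism) : Integrable w1 B.n1 := by
  refine ⟨measurable_w1.aestronglyMeasurable, ?_⟩
  rw [hasFiniteIntegral_iff_ofReal (by filter_upwards [n1_ae B] with z hz using w1_nonneg hz)]
  exact B.n1_moment.lt_top

lemma w2_int (B : BranchingMechanism) : Integrable w2 B.n2 := by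
  refine ⟨measurable_w2.aestronglyMeasurable, ?_⟩
  rw [hasFiniteIntegral_iff_ofReal (by filter_upwards [n2_ae B] with z hz using w2_nonneg hz)]
  exact B.n2_moment.lt_top

def M1 (B : BranchingMechanism) : ℝ := ∫ z, w1 z ∂B.n1
def M2 (B : BranchingMechanism) : ℝ := ∫ z, w2 z ∂B.n2
lemma M1_nonneg (B : BranchingMechanism) : 0 ≤ M1 B :=
  integral_nonneg_of_ae (by filter_upwards [n1_ae B] with z hz using w1_nonneg hz)
lemma M2_nonneg (B : BranchingMechanism) : 0 ≤ M2 B :=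
  integral_nonneg_of_ae (by filter_upwards [n2_ae B] with z hz using w2_nonneg hz)

def E1 (B : BranchingMechanism) (p : ℝ × ℝ) : ℝ :=
  -B.a11 * p.1 - B.alpha * p.1 ^ 2 + ∫ z, gz z p ∂B.n1
def E2 (B : BranchingMechanism) (p : ℝ × ℝ) : ℝ :=
  -B.a21 * (p.1 * p.2) + ∫ z, qz z p ∂B.n2

def tp (v : ℝ × ℝ) : ℝ × ℝ := (v.1, Real.exp (-v.2))

lemma mPhi1_eq (B : BranchingMechanism) (v : ℝ × ℝ) : mPhi1 B v = E1 B (tp v) := by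
  unfold mPhi1 E1
  rw [sub_eq_add_neg, ← integral_neg]
  congr 2
  ext z
  simp only [gz, tp]
  rw [← Real.exp_mul, ← Real.exp_add]
  ring_nf

lemma mPhi2_eq (B : BranchingMechanism) (v : ℝ × ℝ) :
    mPhi2 B v = -(E2 B (tp v) * Real.exp v.2) := by
  unfold mPhi2 E2
  rw [add_mul, neg_add, ← integral_mul_const, ← integral_neg]
  congr 1
  · simp only [tp]
    have : Real.exp (-v.2) * Real.exp v.2 = 1 := by rw [← Real.exp_add]; simp
    linear_combination -B.a21 * v.1 * this
  · congr 1
    ext z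
    simp only [qz, tp]
    rw [← Real.exp_mul, ← Real.exp_add, sub_mul, ← Real.exp_add, ← Real.exp_add]
    simp only [neg_add_cancel, Real.exp_zero, neg_sub]
    ring_nf

def LL (B : BranchingMechanism) (R : ℝ) : ℝ :=
  |B.a11| + 2 * R * B.alpha + (1 + R) * (M1 B + 2 * B.alpha) +
    (B.a21 * (R + 1) + (3 + R) * (M2 B + B.a21))

lemma LL_nonneg (B : BranchingMechanism) {R : ℝ} (hR : 0 ≤ R) : 0 ≤ LL B R := by
  have := M1_nonneg B; have := M2_nonneg B; have := B.a21_nonneg; have := B.alpha_nonneg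
  unfold LL; positivity

lemma E1_lip (B : BranchingMechanism) {R : ℝ} {p p' : ℝ × ℝ} (hp : Reg R p) (hp' : Reg R p') :
    |E1 B p - E1 B p'| ≤ LL B R * dd p p' := by
  have h := igz_lip (n1_ae B) (w1_int B) hp hp'
  obtain ⟨a1, a2, a3, a4⟩ := hp
  obtain ⟨b1, b2, b3, b4⟩ := hp'
  have hR : 0 ≤ R := a1.trans a2
  have e : E1 B p - E1 B p' = (-B.a11 * (p.1 - p'.1)) + (-B.alpha * (p.1 + p'.1)) * (p.1 - p'.1)
    + (∫ z, gz z p ∂B.n1 - ∫ z, gz z p' ∂B.n1) := by unfold E1; ring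
  rw [e]
  refine (abs_add_three _ _ _).trans ?_
  rw [abs_mul, abs_neg, abs_mul, abs_mul, abs_neg, abs_of_nonneg B.alpha_nonneg,
    abs_of_nonneg (by linarith : 0 ≤ p.1 + p'.1)]
  have := M1_nonneg B; have := M2_nonneg B; have := B.a21_nonneg; have := B.alpha_nonneg
  have hd : |p.1 - p'.1| ≤ dd p p' := by unfold dd; linarith [abs_nonneg (p.2 - p'.2)]
  have hd0 := dd_nonneg p p'
  have c1 : |B.a11| * |p.1 - p'.1| ≤ |B.a11| * dd p p' := by gcongr
  have c2 : B.alpha * (p.1 + p'.1) * |p.1 - p'.1| ≤ B.alpha * (R + R) * dd p p' := by gcongr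
  have c3 : 0 ≤ (B.a21 * (R + 1) + (3 + R) * (M2 B + B.a21) + (1+R) * (2 * B.alpha)) * dd p p' := by
    positivity
  unfold LL
  change _ ≤ (1 + R) * (M1 B) * dd p p' at h
  nlinarith

lemma E2_lip (B : BranchingMechanism) {R : ℝ} {p p' : ℝ × ℝ} (hp : Reg R p) (hp' : Reg R p') :
    |E2 B p - E2 B p'| ≤ LL B R * dd p p' := by
  have h := iqz_lip (n2_ae B) (w2_int B) hp hp'
  obtain ⟨a1, a2, a3, a4⟩ := hp
  obtain ⟨b1, b2, b3, b4⟩ := hp'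
  have hR : 0 ≤ R := a1.trans a2
  have e : E2 B p - E2 B p' = (-B.a21 * p.2) * (p.1 - p'.1) + (-B.a21 * p'.1) * (p.2 - p'.2)
    + (∫ z, qz z p ∂B.n2 - ∫ z, qz z p' ∂B.n2) := by unfold E2; ring
  rw [e]
  refine (abs_add_three _ _ _).trans ?_
  rw [abs_mul, abs_mul, abs_neg, abs_mul, abs_mul, abs_neg, abs_of_nonneg B.a21_nonneg,
    abs_of_nonneg a3, abs_of_nonneg b1]
  have := M1_nonneg B; have := M2_nonneg B; have := B.a21_nonneg; have := B.alpha_nonneg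
  have hd : |p.1 - p'.1| ≤ dd p p' := by unfold dd; linarith [abs_nonneg (p.2 - p'.2)]
  have hd2 : |p.2 - p'.2| ≤ dd p p' := by unfold dd; linarith [abs_nonneg (p.1 - p'.1)]
  have hd0 := dd_nonneg p p'
  have c1 : B.a21 * p.2 * |p.1 - p'.1| ≤ B.a21 * 1 * dd p p' := by gcongr
  have c2 : B.a21 * p'.1 * |p.2 - p'.2| ≤ B.a21 * R * dd p p' := by gcongr
  have c3 : 0 ≤ (|B.a11| + 2 * R * B.alpha + (1 + R) * (M1 B + 2 * B.alpha) +
     (3+R) * B.a21) * dd p p' := by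
    positivity
  unfold LL
  change _ ≤ (3 + R) * (M2 B) * dd p p' at h
  nlinarith

def Dom : Set (ℝ × ℝ) := {p | 0 ≤ p.1 ∧ 0 ≤ p.2 ∧ p.2 ≤ 1}

lemma contOn_of_lip (E : ℝ × ℝ → ℝ) (L : ℝ → ℝ)
    (h : ∀ R p p', Reg R p → Reg R p' → |E p - E p'| ≤ L R * dd p p') : ContinuousOn E Dom := by
  intro p0 hp0
  unfold ContinuousWithinAt
  rw [tendsto_iff_dist_tendsto_zero]
  have hc : Tendsto (fun p => L (p0.1 + 1) * dd p p0) (nhdsWithin p0 Dom) (nhds 0) := by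
    have : Continuous (fun p : ℝ × ℝ => L (p0.1 + 1) * dd p p0) := by unfold dd; fun_prop
    have := this.tendsto p0
    simp only [dd, sub_self, abs_zero, add_zero, mul_zero] at this
    exact tendsto_nhdsWithin_of_tendsto_nhds this
  refine squeeze_zero' (Eventually.of_forall fun _ => dist_nonneg) ?_ hc
  have h1 : ∀ᶠ p : ℝ × ℝ in nhdsWithin p0 Dom, p.1 < p0.1 + 1 := by
    apply eventually_nhdsWithin_of_eventually_nhds
    exact (continuous_fst.tendsto p0).eventually (gt_mem_nhds (by linarith))
  filter_upwards [h1, self_mem_nhdsWithin] with p hp1 hp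
  rw [Real.dist_eq]
  exact h _ _ _ ⟨hp.1, hp1.le, hp.2⟩ ⟨hp0.1, by linarith, hp0.2⟩

lemma tp_mem {v : ℝ × ℝ} (h1 : 0 ≤ v.1) (h2 : 0 ≤ v.2) : tp v ∈ Dom := by
  refine ⟨h1, Real.exp_nonneg _, ?_⟩
  simp only [tp, Real.exp_le_one_iff]; linarith

lemma hasDeriv_of_integral {φ V : ℝ → ℝ} {l : ℝ} (hφ : ContinuousOn φ (Ici 0))
    (h : ∀ t, 0 ≤ t → V t = l + ∫ s in (0:ℝ)..t, φ s) {t : ℝ} (ht : 0 ≤ t) :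
    HasDerivWithinAt V (φ t) (Ici 0) t := by
  let ψ : ℝ → ℝ := fun s => φ (max 0 s)
  have hψ : Continuous ψ := by
    refine hφ.comp_continuous (by fun_prop) (fun s => mem_Ici.2 (le_max_left _ _))
  have e : ∀ t, 0 ≤ t → V t = l + ∫ s in (0:ℝ)..t, ψ s := by
    intro t ht
    rw [h t ht]
    congr 1
    apply intervalIntegral.integral_congr
    intro s hs
    rw [uIcc_of_le ht] at hs
    simp [ψ, max_eq_right hs.1]
  have hd : HasDerivAt (fun t => l + ∫ s in (0:ℝ)..t, ψ s) (ψ t) t := by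
    apply HasDerivAt.const_add
    exact intervalIntegral.integral_hasDerivAt_right (hψ.intervalIntegrable _ _)
      (hψ.stronglyMeasurableAtFilter _ _) hψ.continuousAt
  have : ψ t = φ t := by simp [ψ, max_eq_right ht]
  rw [← this]
  exact hd.hasDerivWithinAt.congr (fun s hs => e s hs) (e t ht)

lemma cumulant_deriv {B : BranchingMechanism} {l : ℝ × ℝ} {V : ℝ → ℝ × ℝ}
    (hV : SolvesCumulant B l V) {t : ℝ} (ht : 0 ≤ t) :
    HasDerivWithinAt (fun s => (V s).1) (mPhi1 B (V t)) (Ici 0) t ∧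
    HasDerivWithinAt (fun s => (V s).2) (mPhi2 B (V t)) (Ici 0) t := by
  obtain ⟨hc, hn, hi⟩ := hV
  have hE1 := contOn_of_lip (E1 B) (LL B) (fun R p p' => E1_lip B)
  have hE2 := contOn_of_lip (E2 B) (LL B) (fun R p p' => E2_lip B)
  have htp : ContinuousOn (fun s => tp (V s)) (Ici 0) := by
    have : Continuous tp := by unfold tp; fun_prop
    exact this.comp_continuousOn hc
  have hmem : MapsTo (fun s => tp (V s)) (Ici 0) Dom := fun s hs => tp_mem (hn s hs).1 (hn s hs).2
  refine ⟨hasDeriv_of_integral (φ := fun t => mPhi1 B (V t)) ?_ (fun t ht => (hi t ht).1) ht,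
    hasDeriv_of_integral (φ := fun t => mPhi2 B (V t)) ?_ (fun t ht => (hi t ht).2) ht⟩
  · simp only [mPhi1_eq]
    exact hE1.comp htp hmem
  · simp only [mPhi2_eq]
    exact ((hE2.comp htp hmem).mul (Real.continuous_exp.comp_continuousOn
      (continuous_snd.comp_continuousOn hc))).neg

lemma cumulant_zero {B : BranchingMechanism} {l : ℝ × ℝ} {V : ℝ → ℝ × ℝ}
    (hV : SolvesCumulant B l V) : V 0 = l := by
  have := hV.2.2 0 le_rfl
  simp at this
  exact Prod.ext this.1 this.2

lemma tp_deriv {B : BranchingMechanism} {l : ℝ × ℝ} {V : ℝ → ℝ × ℝ}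
    (hV : SolvesCumulant B l V) {t : ℝ} (ht : 0 ≤ t) :
    HasDerivWithinAt (fun s => (tp (V s)).1) (E1 B (tp (V t))) (Ici 0) t ∧
    HasDerivWithinAt (fun s => (tp (V s)).2) (E2 B (tp (V t))) (Ici 0) t := by
  obtain ⟨h1, h2⟩ := cumulant_deriv hV ht
  rw [mPhi1_eq] at h1
  have := h2.neg.exp
  refine ⟨h1, HasDerivWithinAt.congr_deriv this ?_⟩
  rw [mPhi2_eq]
  have : Real.exp (-(V t).2) * Real.exp (V t).2 = 1 := by rw [← Real.exp_add]; simp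
  simp only [Pi.neg_apply]
  linear_combination E2 B (tp (V t)) * this


lemma gz_le {R : ℝ} {z p : ℝ × ℝ} (hz : z ∈ Mset) (hp : Reg R p) : gz z p ≤ w1 z := by
  obtain ⟨hz1, n, hn⟩ := hz
  obtain ⟨a1, a2, a3, a4⟩ := hp
  have hm0 : 0 ≤ min z.1 (z.1 ^ 2) := le_min hz1 (by positivity)
  have hw : (n : ℝ) ≤ w1 z := by unfold w1; rw [hn]; linarith
  refine le_trans ?_ hw
  simp only [gz, hn, Real.rpow_natCast]
  have h1 := Real.add_one_le_exp (-(p.1 * z.1))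
  have h2 := Real.exp_pos (-(p.1 * z.1))
  rcases Nat.eq_zero_or_pos n with h0 | h0
  · subst h0; simp; linarith
  · have : (1 : ℝ) ≤ n := by exact_mod_cast h0
    have : 0 ≤ p.1 * z.1 := by positivity
    have : 0 ≤ Real.exp (-(p.1 * z.1)) * p.2 ^ n := by positivity
    nlinarith

lemma euler_conv {a h L M R η : ℝ} {E₁ E₂ : ℝ × ℝ → ℝ} {ν1 ν2 : Measure (ℝ × ℝ)} 
    (hh : 0 ≤ h) (hL : 0 ≤ L) (hη : 0 ≤ η) (hM : 0 ≤ M)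
    (hs1 : ∀ᵐ z ∂ν1, z ∈ Mset)
    (hw1 : Integrable w1 ν1) (hM1 : ∫ z, w1 z ∂ν1 ≤ M)
    (hL1 : ∀ p p', Reg R p → Reg R p' → |D1 a ν1 p - D1 a ν1 p'| ≤ L * dd p p')
    (hL2 : ∀ p p', Reg R p → Reg R p' → |D2 ν2 p - D2 ν2 p'| ≤ L * dd p p')
    {x : ℕ → ℝ × ℝ} (hx : ∀ j, x (j+1) = estep a h ν1 ν2 (x j))
    (hdom : ∀ j, x j ∈ Dom) {p : ℝ → ℝ × ℝ} (n : ℕ)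
    (hR : ((x 0).1 + n * h * M) * Real.exp (n * h * |a|) ≤ R)
    (hpR : ∀ t, 0 ≤ t → t ≤ n * h → Reg R (p t)) (h0 : p 0 = x 0)
    (hd1 : ∀ t, 0 ≤ t → HasDerivWithinAt (fun s => (p s).1) (E₁ (p t)) (Ici 0) t)
    (hd2 : ∀ t, 0 ≤ t → HasDerivWithinAt (fun s => (p s).2) (E₂ (p t)) (Ici 0) t)
    (hl1 : ∀ s t, 0 ≤ t → t ≤ s → s ≤ n * h → s ≤ t + h → |E₁ (p s) - D1 a ν1 (p t)| ≤ η)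
    (hl2 : ∀ s t, 0 ≤ t → t ≤ s → s ≤ n * h → s ≤ t + h → |E₂ (p s) - D2 ν2 (p t)| ≤ η) :
    dd (x n) (p (n * h)) ≤ 2 * (n * h) * η * Real.exp (2 * L * (n * h)) := by
  have hub : ∀ j, (x j).1 ≤ ((x 0).1 + j * h * M) * Real.exp (j * h * |a|) := by
    intro j
    induction j with
    | zero => simp
    | succ j ih =>
      have hreg : Reg (x j).1 (x j) := ⟨(hdom j).1, le_rfl, (hdom j).2⟩
      have g1 : ∫ z, gz z (x j) ∂ν1 ≤ M := by
        refine le_trans (integral_mono_ae (gz_int hs1 hw1 hreg) hw1 ?_) hM1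
        filter_upwards [hs1] with z hz using gz_le hz hreg
      rw [hx]; simp only [estep, D1]
      have q1 : -a * (x j).1 ≤ |a| * (x j).1 :=
        mul_le_mul_of_nonneg_right (neg_le_abs a) (hdom j).1
      have q2 : h * (-a * (x j).1 + ∫ z, gz z (x j) ∂ν1) ≤ h * (|a| * (x j).1 + M) := by
        gcongr
      have q3 := Real.add_one_le_exp (h * |a|)
      have e : Real.exp (((j + 1 : ℕ) : ℝ) * h * |a|) =
          Real.exp (j * h * |a|) * Real.exp (h * |a|) := by
        rw [← Real.exp_add]; push_cast; ring_nf
      have x0 := (hdom 0).1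
      have q4 : 1 ≤ Real.exp (((j + 1 : ℕ) : ℝ) * h * |a|) := by
        apply Real.one_le_exp; positivity
      have q5 : (x j).1 * (h * |a| + 1) ≤ (((x 0).1 + j * h * M) * Real.exp (j * h * |a|)) *
          Real.exp (h * |a|) := by gcongr
      have q6 : h * M * 1 ≤ h * M * Real.exp (((j + 1 : ℕ) : ℝ) * h * |a|) := by gcongr
      have : ((x 0).1 + ((j + 1 : ℕ) : ℝ) * h * M) * Real.exp (((j + 1 : ℕ) : ℝ) * h * |a|)
        = (((x 0).1 + j * h * M) * Real.exp (j * h * |a|)) *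
          Real.exp (h * |a|) + h * M * Real.exp (((j + 1 : ℕ) : ℝ) * h * |a|) := by
        rw [e]; push_cast; ring
      rw [this]
      linarith
  have hxR : ∀ j, j ≤ n → Reg R (x j) := by
    intro j hj
    refine ⟨(hdom j).1, ((hub j).trans ?_).trans hR, (hdom j).2⟩
    have : (j : ℝ) ≤ n := by exact_mod_cast hj
    have x0 := (hdom 0).1
    gcongr
  have loc : ∀ (f : ℝ → ℝ) (f' : ℝ → ℝ) (A : ℝ) (t : ℝ), 0 ≤ t →
      (∀ s, 0 ≤ s → HasDerivWithinAt f (f' s) (Ici 0) s) →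
      (∀ s, t ≤ s → s ≤ t + h → |f' s - A| ≤ η) → |f (t + h) - f t - h * A| ≤ h * η := by
    intro f f' A t ht hf hb
    have hd : ∀ s, 0 ≤ s → HasDerivWithinAt (fun s => f s - s * A) (f' s - A) (Ici 0) s := by
      intro s hs
      have := (hf s hs).sub ((hasDerivWithinAt_id s (Ici 0)).mul_const A)
      rw [one_mul] at this
      exact this
    have := norm_image_sub_le_of_norm_deriv_right_le_segment (f := fun s => f s - s * A)
      (f' := fun s => f' s - A) (a := t) (b := t + h) (C := η)
      (fun s hs => ((hd s (ht.trans hs.1)).continuousWithinAt).mono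
        (fun r hr => mem_Ici.2 (ht.trans hr.1)))
      (fun s hs => (hd s (ht.trans hs.1)).mono (fun r hr => mem_Ici.2 ((ht.trans hs.1).trans hr)))
      (fun s hs => hb s hs.1 hs.2.le) (t + h) ⟨by linarith, le_rfl⟩
    rw [Real.norm_eq_abs] at this
    have e : f (t + h) - (t + h) * A - (f t - t * A) = f (t + h) - f t - h * A := by ring
    rw [e] at this
    linarith
  have key : ∀ j, j ≤ n → dd (x j) (p (j * h)) ≤ 2 * (j * h) * η * Real.exp (2 * L * (j * h)) := by
    intro j
    induction j with
    | zero => intro _; simp [h0, dd]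
    | succ j ih =>
      intro hj
      have ih := ih (by omega)
      have hjn : ((j + 1 : ℕ) : ℝ) ≤ n := by exact_mod_cast hj
      have hjn' : (j : ℝ) * h + h ≤ n * h := by
        have := mul_le_mul_of_nonneg_right hjn hh
        push_cast at this; linarith
      have hj0 : 0 ≤ (j : ℝ) * h := by positivity
      have rx := hxR j (by omega)
      have rp := hpR (j * h) hj0 (by linarith)
      have l1 := loc (fun s => (p s).1) (fun s => E₁ (p s)) (D1 a ν1 (p (j * h))) (j * h) hj0 hd1
        (fun s h1 h2 => hl1 s _ hj0 h1 (by linarith) h2)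
      have l2 := loc (fun s => (p s).2) (fun s => E₂ (p s)) (D2 ν2 (p (j * h))) (j * h) hj0 hd2
        (fun s h1 h2 => hl2 s _ hj0 h1 (by linarith) h2)
      have k1 := mul_le_mul_of_nonneg_left (hL1 _ _ rx rp) hh
      have k2 := mul_le_mul_of_nonneg_left (hL2 _ _ rx rp) hh
      have ej : ((j + 1 : ℕ) : ℝ) * h = j * h + h := by push_cast; ring
      rw [ej, hx]
      have z1 : |(x j).1 + h * D1 a ν1 (x j) - (p (j * h + h)).1| ≤
          |(x j).1 - (p (j * h)).1| + h * (L * dd (x j) (p (j * h))) + h * η := by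
        have e : (x j).1 + h * D1 a ν1 (x j) - (p (j * h + h)).1 =
          ((x j).1 - (p (j * h)).1) + h * (D1 a ν1 (x j) - D1 a ν1 (p (j * h))) +
          -((p (j * h + h)).1 - (p (j * h)).1 - h * D1 a ν1 (p (j * h))) := by ring
        rw [e]
        refine (abs_add_three _ _ _).trans ?_
        rw [abs_neg, abs_mul, abs_of_nonneg hh]
        exact add_le_add (add_le_add le_rfl k1) l1
      have z2 : |(x j).2 + h * D2 ν2 (x j) - (p (j * h + h)).2| ≤
          |(x j).2 - (p (j * h)).2| + h * (L * dd (x j) (p (j * h))) + h * η := by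
        have e : (x j).2 + h * D2 ν2 (x j) - (p (j * h + h)).2 =
          ((x j).2 - (p (j * h)).2) + h * (D2 ν2 (x j) - D2 ν2 (p (j * h))) +
          -((p (j * h + h)).2 - (p (j * h)).2 - h * D2 ν2 (p (j * h))) := by ring
        rw [e]
        refine (abs_add_three _ _ _).trans ?_
        rw [abs_neg, abs_mul, abs_of_nonneg hh]
        exact add_le_add (add_le_add le_rfl k2) l2
      have z3 : dd (estep a h ν1 ν2 (x j)) (p (j * h + h)) ≤
          dd (x j) (p (j * h)) * (2 * L * h + 1) + 2 * h * η := by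
        have : dd (x j) (p (j * h)) = |(x j).1 - (p (j * h)).1| + |(x j).2 - (p (j * h)).2| := rfl
        show |(x j).1 + h * D1 a ν1 (x j) - (p (j * h + h)).1| +
          |(x j).2 + h * D2 ν2 (x j) - (p (j * h + h)).2| ≤ _
        linarith
      refine z3.trans ?_
      have q3 := Real.add_one_le_exp (2 * L * h)
      have e : Real.exp (2 * L * (j * h + h)) =
          Real.exp (2 * L * (j * h)) * Real.exp (2 * L * h) := by
        rw [← Real.exp_add]; ring_nf
      have q4 : 1 ≤ Real.exp (2 * L * (j * h + h)) := by
        apply Real.one_le_exp; positivity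
      have q5 : dd (x j) (p (j * h)) * (2 * L * h + 1) ≤
        (2 * (j * h) * η * Real.exp (2 * L * (j * h))) * Real.exp (2 * L * h) := by
        have := dd_nonneg (x j) (p (j * h))
        gcongr
      have q6 : 2 * h * η * 1 ≤ 2 * h * η * Real.exp (2 * L * (j * h + h)) := by gcongr
      have : 2 * (j * h + h) * η * Real.exp (2 * L * (j * h + h)) =
        (2 * (j * h) * η * Real.exp (2 * L * (j * h))) * Real.exp (2 * L * h) +
        2 * h * η * Real.exp (2 * L * (j * h + h)) := by rw [e]; ring
      linarith
  exact key n le_rfl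


def dl (k : ℕ) : ℝ := 1 / ((k : ℝ) + 1)
lemma dl_pos (k : ℕ) : 0 < dl k := by unfold dl; positivity
lemma dl_le (k : ℕ) : dl k ≤ 1 := by
  unfold dl; rw [div_le_one (by positivity)]; linarith [(Nat.cast_nonneg k : (0:ℝ) ≤ k)]
lemma dl_tendsto : Tendsto dl atTop (nhds 0) := tendsto_one_div_add_atTop_nhds_zero_nat

def SS (k : ℕ) : Set (ℝ × ℝ) := {z | dl k ≤ z.1 ∨ z.2 ≠ 0}

lemma SS_meas (k : ℕ) : MeasurableSet (SS k) := by
  refine (measurableSet_le measurable_const measurable_fst).union ?_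
  exact (measurable_snd (measurableSet_singleton (0:ℝ))).compl

def nk (n : Measure (ℝ × ℝ)) (c : ℝ) (k : ℕ) : Measure (ℝ × ℝ) :=
  n.restrict (SS k) + ENNReal.ofReal c • Measure.dirac (dl k, 0)

lemma nk_ae {n : Measure (ℝ × ℝ)} {c : ℝ} {k : ℕ} {S : Set (ℝ × ℝ)} (h : ∀ᵐ z ∂n, z ∈ S)
    (h' : (dl k, (0:ℝ)) ∈ S) : ∀ᵐ z ∂(nk n c k), z ∈ S := by
  unfold nk
  rw [ae_add_measure_iff]
  refine ⟨ae_restrict_of_ae h, Measure.ae_smul_measure ?_ _⟩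
  rw [ae_dirac_eq]; exact h'

lemma nk_fin {n : Measure (ℝ × ℝ)} {c : ℝ} {k : ℕ} (h : n (SS k) < ⊤) :
    IsFiniteMeasure (nk n c k) := by
  unfold nk
  have : IsFiniteMeasure (n.restrict (SS k)) := ⟨by simpa using h⟩
  have : IsFiniteMeasure (ENNReal.ofReal c • Measure.dirac ((dl k, (0:ℝ)))) :=
    Measure.smul_finite _ ENNReal.ofReal_ne_top
  infer_instance

lemma nk_integrable {n : Measure (ℝ × ℝ)} {c : ℝ} {k : ℕ} {f : ℝ × ℝ → ℝ}
    (h : IntegrableOn f (SS k) n) : Integrable f (nk n c k) := by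
  unfold nk
  refine Integrable.add_measure h ?_
  refine Integrable.smul_measure ?_ ENNReal.ofReal_ne_top
  exact integrable_dirac (by simp)

lemma nk_integral {n : Measure (ℝ × ℝ)} {c : ℝ} (hc : 0 ≤ c) {k : ℕ} {f : ℝ × ℝ → ℝ}
    (h : IntegrableOn f (SS k) n) :
    ∫ z, f z ∂(nk n c k) = ∫ z in SS k, f z ∂n + c * f (dl k, 0) := by
  unfold nk
  rw [integral_add_measure h]
  · rw [integral_smul_measure, integral_dirac, ENNReal.toReal_ofReal hc, smul_eq_mul]
  · refine Integrable.smul_measure ?_ ENNReal.ofReal_ne_top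
    exact integrable_dirac (by simp)

lemma tail_tendsto {n : Measure (ℝ × ℝ)} {f : ℝ × ℝ → ℝ} (hf : Integrable f n)
    (h0 : ∀ᵐ z ∂n, 0 ≤ z.1) (hz : f 0 = 0) :
    Tendsto (fun k => ∫ z in (SS k)ᶜ, f z ∂n) atTop (nhds 0) := by
  have : Tendsto (fun k => ∫ z, (SS k)ᶜ.indicator f z ∂n) atTop (nhds (∫ z, (0:ℝ) ∂n)) := by
    refine tendsto_integral_of_dominated_convergence (fun z => |f z|) ?_ hf.abs ?_ ?_
    · intro k
      exact hf.aestronglyMeasurable.indicator (SS_meas k).compl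
    · intro k
      refine Eventually.of_forall fun z => ?_
      exact norm_indicator_le_norm_self f z
    · filter_upwards [h0] with z hz0
      by_cases hz2 : z.2 = 0
      · rcases hz0.eq_or_lt with h1 | h1
        · have : z = 0 := Prod.ext h1.symm hz2
          subst this
          refine tendsto_const_nhds.congr fun k => ?_
          simp [indicator, hz]
        · refine tendsto_const_nhds.congr' ?_
          filter_upwards [dl_tendsto.eventually (gt_mem_nhds h1)] with k hk
          rw [indicator_of_notMem]
          simp only [mem_compl_iff, not_not, SS, mem_ofPred_eq]
          exact Or.inl hk.le
      · refine tendsto_const_nhds.congr fun k => ?_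
        rw [indicator_of_notMem]
        simp only [mem_compl_iff, not_not, SS, mem_ofPred_eq]
        exact Or.inr hz2
  simp only [integral_zero] at this
  refine this.congr fun k => ?_
  rw [integral_indicator (SS_meas k).compl]

lemma exp_quad {x : ℝ} (hx : 0 ≤ x) : Real.exp (-x) ≤ 1 - x + x ^ 2 / 2 := by
  have h := Real.quadratic_le_exp_of_nonneg hx
  have e : Real.exp (-x) * Real.exp x = 1 := by rw [← Real.exp_add]; simp
  have p := Real.exp_pos (-x)
  have p2 : 0 ≤ 1 - x + x ^ 2 / 2 := by nlinarith [sq_nonneg (x - 1)]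
  have : Real.exp (-x) * (1 + x + x ^ 2 / 2) ≤ 1 := by nlinarith
  have q : (1 - x + x ^ 2 / 2) * (1 + x + x ^ 2 / 2) ≥ 1 := by nlinarith [sq_nonneg (x ^ 2)]
  have : 0 < 1 + x + x ^ 2 / 2 := by positivity
  nlinarith

lemma exp_cubic {x : ℝ} (hx : 0 ≤ x) : 1 - x + x ^ 2 / 2 - x ^ 3 ≤ Real.exp (-x) := by
  rcases le_or_gt x 1 with h | h
  · have := Real.exp_bound (x := -x) (by rw [abs_neg, abs_of_nonneg hx]; exact h) (n := 3) (by norm_num)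
    simp only [Finset.sum_range_succ, Finset.sum_range_zero, Nat.factorial] at this
    have := (abs_le.1 this).1
    rw [abs_neg, abs_of_nonneg hx] at this
    norm_num at this
    have : 0 ≤ x ^ 3 := by positivity
    linarith
  · have := Real.exp_pos (-x)
    nlinarith [sq_nonneg x, mul_pos (show 0 < x by linarith) (show 0 < x by linarith)]

lemma gz_dirac {R : ℝ} {p : ℝ × ℝ} (hp : Reg R p) (k : ℕ) {α : ℝ} (hα : 0 ≤ α) :
    |2 * α * ((k:ℝ) + 1) ^ 2 * gz (dl k, 0) p + α * p.1 ^ 2| ≤ 2 * α * R ^ 3 * dl k := by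
  obtain ⟨a1, a2, -, -⟩ := hp
  have hk : ((k:ℝ) + 1) * dl k = 1 := by unfold dl; field_simp
  have d0 := (dl_pos k).le
  set x := p.1 * dl k with hx
  have x0 : 0 ≤ x := mul_nonneg a1 d0
  have e : 2 * α * ((k:ℝ) + 1) ^ 2 * gz (dl k, 0) p + α * p.1 ^ 2 =
      2 * α * ((k:ℝ) + 1) ^ 2 * (1 - x + x ^ 2 / 2 - Real.exp (-x)) := by
    simp only [gz, Real.rpow_zero, mul_one, ← hx]
    have : ((k:ℝ) + 1) ^ 2 * x ^ 2 = p.1 ^ 2 := by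
      rw [hx]; linear_combination (p.1 ^ 2 * (((k:ℝ) + 1) * dl k + 1)) * hk
    rw [mul_comm (dl k) p.1]
    linear_combination - α * this
  rw [e, abs_of_nonneg (mul_nonneg (by positivity) (by linarith [exp_quad x0]))]
  have h1 : 1 - x + x ^ 2 / 2 - Real.exp (-x) ≤ x ^ 3 := by linarith [exp_cubic x0]
  have h2 : ((k:ℝ) + 1) ^ 2 * x ^ 3 = p.1 ^ 3 * dl k := by
    rw [hx]; linear_combination (p.1 ^ 3 * dl k * (((k:ℝ) + 1) * dl k + 1)) * hk
  calc _ ≤ 2 * α * ((k:ℝ) + 1) ^ 2 * x ^ 3 := by gcongr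
    _ = 2 * α * (p.1 ^ 3 * dl k) := by linear_combination 2 * α * h2
    _ ≤ 2 * α * (R ^ 3 * dl k) := by gcongr
    _ = _ := by ring

lemma qz_dirac {R : ℝ} {p : ℝ × ℝ} (hp : Reg R p) (k : ℕ) {α : ℝ} (hα : 0 ≤ α) :
    |α * ((k:ℝ) + 1) * qz (dl k, 0) p + α * (p.1 * p.2)| ≤ α * R ^ 2 * dl k := by
  obtain ⟨a1, a2, a3, a4⟩ := hp
  have hk : ((k:ℝ) + 1) * dl k = 1 := by unfold dl; field_simp
  have d0 := (dl_pos k).le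
  set x := p.1 * dl k with hx
  have x0 : 0 ≤ x := mul_nonneg a1 d0
  have h3 := Real.add_one_le_exp (-x)
  have e : α * ((k:ℝ) + 1) * qz (dl k, 0) p + α * (p.1 * p.2) =
      α * ((k:ℝ) + 1) * p.2 * (Real.exp (-x) - 1 + x) := by
    simp only [qz, zero_add, Real.rpow_one, ← hx]
    have : ((k:ℝ) + 1) * x = p.1 := by
      rw [hx]; linear_combination p.1 * hk
    linear_combination - α * p.2 * this
  rw [e, abs_of_nonneg (mul_nonneg (by positivity) (by linarith))]
  have h1 : Real.exp (-x) - 1 + x ≤ x ^ 2 := by nlinarith [exp_quad x0]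
  have h2 : ((k:ℝ) + 1) * x ^ 2 = p.1 ^ 2 * dl k := by
    rw [hx]; linear_combination (p.1 ^ 2 * dl k) * hk
  have h0 : 0 ≤ Real.exp (-x) - 1 + x := by linarith
  calc _ ≤ α * ((k:ℝ) + 1) * 1 * x ^ 2 := by gcongr
    _ = α * (p.1 ^ 2 * dl k) := by linear_combination α * h2
    _ ≤ α * (R ^ 2 * dl k) := by gcongr
    _ = _ := by ring

def nu1 (B : BranchingMechanism) (k : ℕ) : Measure (ℝ × ℝ) :=
  nk B.n1 (2 * B.alpha * ((k:ℝ) + 1) ^ 2) k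
def nu2 (B : BranchingMechanism) (k : ℕ) : Measure (ℝ × ℝ) :=
  nk B.n2 (B.a21 * ((k:ℝ) + 1)) k

lemma nu1_ae (B : BranchingMechanism) (k : ℕ) : ∀ᵐ z ∂(nu1 B k), z ∈ Mset :=
  nk_ae (n1_ae B) ⟨(dl_pos k).le, 0, by simp⟩
lemma nu2_ae (B : BranchingMechanism) (k : ℕ) : ∀ᵐ z ∂(nu2 B k), z ∈ Mm1set :=
  nk_ae (n2_ae B) ⟨(dl_pos k).le, 0, by norm_num, by simp⟩

lemma dl_sq_le (k : ℕ) : dl k ^ 2 ≤ dl k := by nlinarith [dl_pos k, dl_le k]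

lemma w1_ge {k : ℕ} {z : ℝ × ℝ} (hz : z ∈ Mset) (h : z ∈ SS k) : dl k ^ 2 ≤ w1 z := by
  obtain ⟨h1, n, hn⟩ := hz
  have d0 := dl_pos k
  have d1 := dl_le k
  have d2 := dl_sq_le k
  unfold w1
  rcases h with h | h
  · have : dl k ^ 2 ≤ min z.1 (z.1 ^ 2) := le_min (by linarith) (by gcongr)
    have : 0 ≤ z.2 := by rw [hn]; positivity
    linarith
  · have : 0 ≤ min z.1 (z.1 ^ 2) := le_min h1 (by positivity)
    have : 1 ≤ z.2 := by
      rw [hn] at h ⊢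
      have : n ≠ 0 := by exact_mod_cast h
      exact_mod_cast Nat.one_le_iff_ne_zero.2 this
    linarith

lemma w1_ge' {k : ℕ} {z : ℝ × ℝ} (hz : z ∈ Mset) (h : z ∈ SS k) : dl k * z.1 ≤ w1 z := by
  obtain ⟨h1, n, hn⟩ := hz
  have d0 := dl_pos k
  have d1 := dl_le k
  unfold w1
  have hz2 : 0 ≤ z.2 := by rw [hn]; positivity
  rcases h with h | h
  · have : dl k * z.1 ≤ min z.1 (z.1 ^ 2) := le_min (by nlinarith) (by nlinarith)
    linarith
  · have : 1 ≤ z.2 := by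
      rw [hn] at h ⊢
      have : n ≠ 0 := by exact_mod_cast h
      exact_mod_cast Nat.one_le_iff_ne_zero.2 this
    rcases le_or_gt z.1 1 with h5 | h5
    · have : 0 ≤ min z.1 (z.1 ^ 2) := le_min h1 (by positivity)
      nlinarith
    · have : dl k * z.1 ≤ min z.1 (z.1 ^ 2) := le_min (by nlinarith) (by nlinarith)
      linarith

lemma w2_ge {k : ℕ} {z : ℝ × ℝ} (hz : z ∈ Mm1set) (h : z ∈ SS k) : dl k ≤ w2 z := by
  obtain ⟨h1, n, hn1, hn⟩ := hz
  have d0 := dl_pos k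
  have d1 := dl_le k
  unfold w2
  rcases h with h | h
  · linarith [abs_nonneg z.2]
  · have : 1 ≤ |z.2| := by
      rw [hn] at h ⊢
      have : n ≠ 0 := by exact_mod_cast h
      exact_mod_cast Int.one_le_abs this
    linarith

instance nu1_fin (B : BranchingMechanism) (k : ℕ) : IsFiniteMeasure (nu1 B k) := by
  refine nk_fin ?_
  refine lt_of_le_of_lt ?_ ((w1_int B).measure_ge_lt_top (pow_pos (dl_pos k) 2))
  refine measure_mono_ae ?_
  filter_upwards [n1_ae B] with z hz h using w1_ge hz h

instance nu2_fin (B : BranchingMechanism) (k : ℕ) : IsFiniteMeasure (nu2 B k) := by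
  refine nk_fin ?_
  refine lt_of_le_of_lt ?_ ((w2_int B).measure_ge_lt_top (dl_pos k))
  refine measure_mono_ae ?_
  filter_upwards [n2_ae B] with z hz h using w2_ge hz h

lemma nu1_fst (B : BranchingMechanism) (k : ℕ) : Integrable (fun z => z.1) (nu1 B k) := by
  refine nk_integrable ?_
  refine Integrable.mono' (((w1_int B).const_mul (1 / dl k)).integrableOn (s := SS k))
    measurable_fst.aestronglyMeasurable ?_
  filter_upwards [ae_restrict_mem (SS_meas k), ae_restrict_of_ae (n1_ae B)] with z h1 h2
  have := w1_ge' h2 h1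
  rw [Real.norm_eq_abs, abs_of_nonneg h2.1, one_div, ← div_eq_inv_mul, le_div_iff₀ (dl_pos k)]
  linarith

lemma nu1_w1 (B : BranchingMechanism) (k : ℕ) : Integrable w1 (nu1 B k) :=
  nk_integrable (w1_int B).integrableOn
lemma nu2_w2 (B : BranchingMechanism) (k : ℕ) : Integrable w2 (nu2 B k) :=
  nk_integrable (w2_int B).integrableOn

lemma nu1_int_w1 (B : BranchingMechanism) (k : ℕ) : ∫ z, w1 z ∂(nu1 B k) ≤ M1 B + 2 * B.alpha := by
  have := B.alpha_nonneg
  unfold nu1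
  rw [nk_integral (by positivity) (w1_int B).integrableOn]
  have hk : ((k:ℝ) + 1) * dl k = 1 := by unfold dl; field_simp
  refine add_le_add (setIntegral_le_integral (w1_int B) ?_) (le_of_eq ?_)
  · filter_upwards [n1_ae B] with z hz using w1_nonneg hz
  · simp only [w1, add_zero, min_eq_right (dl_sq_le k)]
    linear_combination 2 * B.alpha * (((k:ℝ) + 1) * dl k + 1) * hk

lemma nu2_int_w2 (B : BranchingMechanism) (k : ℕ) : ∫ z, w2 z ∂(nu2 B k) ≤ M2 B + B.a21 := by
  have := B.a21_nonneg
  unfold nu2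
  rw [nk_integral (by positivity) (w2_int B).integrableOn]
  have hk : ((k:ℝ) + 1) * dl k = 1 := by unfold dl; field_simp
  refine add_le_add (setIntegral_le_integral (w2_int B) ?_) (le_of_eq ?_)
  · filter_upwards [n2_ae B] with z hz using w2_nonneg hz
  · simp only [w2, add_zero, abs_zero]
    linear_combination B.a21 * hk

lemma D1_lip (B : BranchingMechanism) (k : ℕ) {R : ℝ} {p p' : ℝ × ℝ} (hp : Reg R p)
    (hp' : Reg R p') : |D1 B.a11 (nu1 B k) p - D1 B.a11 (nu1 B k) p'| ≤ LL B R * dd p p' := by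
  have h := igz_lip (nu1_ae B k) (nu1_w1 B k) hp hp'
  have hR : 0 ≤ R := hp.1.trans hp.2.1
  have h2 := nu1_int_w1 B k
  have dn := dd_nonneg p p'
  have e : D1 B.a11 (nu1 B k) p - D1 B.a11 (nu1 B k) p' = (-B.a11 * (p.1 - p'.1))
    + (∫ z, gz z p ∂(nu1 B k) - ∫ z, gz z p' ∂(nu1 B k)) := by unfold D1; ring
  rw [e]
  refine (abs_add_le _ _).trans ?_
  rw [abs_mul, abs_neg]
  have h3 : |B.a11| * |p.1 - p'.1| ≤ |B.a11| * dd p p' := by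
    gcongr; unfold dd; linarith [abs_nonneg (p.2 - p'.2)]
  have h4 : (1 + R) * (∫ z, w1 z ∂(nu1 B k)) * dd p p' ≤ (1 + R) * (M1 B + 2 * B.alpha) * dd p p' := by
    gcongr
  have := M2_nonneg B; have := B.a21_nonneg; have := B.alpha_nonneg
  have h5 : 0 ≤ (2 * R * B.alpha + (B.a21 * (R + 1) + (3 + R) * (M2 B + B.a21))) * dd p p' := by positivity
  unfold LL
  linarith

lemma D2_lip (B : BranchingMechanism) (k : ℕ) {R : ℝ} {p p' : ℝ × ℝ} (hp : Reg R p)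
    (hp' : Reg R p') : |D2 (nu2 B k) p - D2 (nu2 B k) p'| ≤ LL B R * dd p p' := by
  have h := iqz_lip (nu2_ae B k) (nu2_w2 B k) hp hp'
  have hR : 0 ≤ R := hp.1.trans hp.2.1
  have h2 := nu2_int_w2 B k
  have dn := dd_nonneg p p'
  unfold D2
  have h4 : (3 + R) * (∫ z, w2 z ∂(nu2 B k)) * dd p p' ≤ (3 + R) * (M2 B + B.a21) * dd p p' := by
    gcongr
  have := M1_nonneg B; have := B.a21_nonneg; have := B.alpha_nonneg
  have h5 : 0 ≤ (|B.a11| + 2 * R * B.alpha + (1 + R) * (M1 B + 2 * B.alpha) + B.a21 * (R + 1)) * dd p p' := by positivity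
  unfold LL
  linarith

def del (B : BranchingMechanism) (R : ℝ) (k : ℕ) : ℝ :=
  ((1 + R) * (R + 1) * ∫ z in (SS k)ᶜ, w1 z ∂B.n1) + 2 * B.alpha * R ^ 3 * dl k +
  (((3 + R) * (R + 1) * ∫ z in (SS k)ᶜ, w2 z ∂B.n2) + B.a21 * R ^ 2 * dl k)

lemma del_tendsto (B : BranchingMechanism) (R : ℝ) : Tendsto (del B R) atTop (nhds 0) := by
  have h1 := tail_tendsto (w1_int B) (by filter_upwards [n1_ae B] with z hz using hz.1) (by simp [w1])
  have h2 := tail_tendsto (w2_int B) (by filter_upwards [n2_ae B] with z hz using hz.1) (by simp [w2])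
  have := ((h1.const_mul ((1 + R) * (R + 1))).add (dl_tendsto.const_mul (2 * B.alpha * R ^ 3))).add
    ((h2.const_mul ((3 + R) * (R + 1))).add (dl_tendsto.const_mul (B.a21 * R ^ 2)))
  simp only [mul_zero, add_zero] at this
  exact this

lemma D_approx (B : BranchingMechanism) {R : ℝ} (k : ℕ) {p : ℝ × ℝ} (hp : Reg R p) :
    |E1 B p - D1 B.a11 (nu1 B k) p| ≤ del B R k ∧ |E2 B p - D2 (nu2 B k) p| ≤ del B R k := by
  have hR : 0 ≤ R := hp.1.trans hp.2.1
  have ha := B.alpha_nonneg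
  have ha2 := B.a21_nonneg
  have d0 := (dl_pos k).le
  have g := gz_int (n1_ae B) (w1_int B) hp
  have q := qz_int (n2_ae B) (w2_int B) hp
  have t1 : |∫ z in (SS k)ᶜ, gz z p ∂B.n1| ≤ (1 + R) * (R + 1) * ∫ z in (SS k)ᶜ, w1 z ∂B.n1 := by
    rw [← integral_const_mul, ← Real.norm_eq_abs]
    refine norm_integral_le_of_norm_le ((w1_int B).const_mul _).integrableOn ?_
    filter_upwards [ae_restrict_of_ae (n1_ae B)] with z hz using gz_bd hz hp
  have t2 : |∫ z in (SS k)ᶜ, qz z p ∂B.n2| ≤ (3 + R) * (R + 1) * ∫ z in (SS k)ᶜ, w2 z ∂B.n2 := by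
    rw [← integral_const_mul, ← Real.norm_eq_abs]
    refine norm_integral_le_of_norm_le ((w2_int B).const_mul _).integrableOn ?_
    filter_upwards [ae_restrict_of_ae (n2_ae B)] with z hz using qz_bd hz hp
  have s1 := gz_dirac hp k ha
  have s2 := qz_dirac hp k ha2
  have n1' : 0 ≤ 2 * B.alpha * R ^ 3 * dl k := by positivity
  have n2' : 0 ≤ B.a21 * R ^ 2 * dl k := by positivity
  have t1' := (abs_nonneg _).trans t1
  have t2' := (abs_nonneg _).trans t2
  constructor
  · have e : E1 B p - D1 B.a11 (nu1 B k) p = (∫ z in (SS k)ᶜ, gz z p ∂B.n1) -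
      (2 * B.alpha * ((k:ℝ) + 1) ^ 2 * gz (dl k, 0) p + B.alpha * p.1 ^ 2) := by
      unfold E1 D1 nu1
      rw [nk_integral (by positivity) g.integrableOn, ← integral_add_compl (SS_meas k) g]
      ring
    rw [e]
    refine (abs_sub _ _).trans ?_
    unfold del; linarith
  · have e : E2 B p - D2 (nu2 B k) p = (∫ z in (SS k)ᶜ, qz z p ∂B.n2) -
      (B.a21 * ((k:ℝ) + 1) * qz (dl k, 0) p + B.a21 * (p.1 * p.2)) := by
      unfold E2 D2 nu2
      rw [nk_integral (by positivity) q.integrableOn, ← integral_add_compl (SS_meas k) q]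
      ring
    rw [e]
    refine (abs_sub _ _).trans ?_
    unfold del; linarith

/-- number of Euler steps -/
def ns (B : BranchingMechanism) (T : ℝ) (k : ℕ) : ℕ :=
  ⌈T * (|B.a11 + ∫ z, z.1 ∂(nu1 B k)| + (nu2 B k).real univ)⌉₊ + k + 1
def hs (B : BranchingMechanism) (T : ℝ) (k : ℕ) : ℝ := T / ns B T k

lemma ns_pos (B : BranchingMechanism) (T : ℝ) (k : ℕ) : (0:ℝ) < ns B T k := by
  unfold ns; positivity
lemma ns_hs (B : BranchingMechanism) (T : ℝ) (k : ℕ) : ns B T k * hs B T k = T := by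
  unfold hs; have := (ns_pos B T k).ne'; field_simp
lemma hs_nonneg (B : BranchingMechanism) {T : ℝ} (hT : 0 ≤ T) (k : ℕ) : 0 ≤ hs B T k :=
  div_nonneg hT (ns_pos B T k).le
lemma hs_le (B : BranchingMechanism) {T : ℝ} (hT : 0 ≤ T) (k : ℕ) : hs B T k ≤ T * dl k := by
  unfold hs dl
  rw [mul_one_div]
  gcongr
  unfold ns; push_cast
  have : (0:ℝ) ≤ (⌈T * (|B.a11 + ∫ z, z.1 ∂(nu1 B k)| + (nu2 B k).real univ)⌉₊ : ℝ) := by positivity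
  linarith

lemma hs_bd (B : BranchingMechanism) {T : ℝ} (hT : 0 ≤ T) (k : ℕ) :
    hs B T k * (|B.a11 + ∫ z, z.1 ∂(nu1 B k)| + (nu2 B k).real univ) ≤ 1 := by
  unfold hs
  rw [div_mul_eq_mul_div, div_le_one (ns_pos B T k)]
  unfold ns; push_cast
  have := Nat.le_ceil (T * (|B.a11 + ∫ z, z.1 ∂(nu1 B k)| + (nu2 B k).real univ))
  have : (0:ℝ) ≤ k := by positivity
  linarith

def eul (B : BranchingMechanism) (T : ℝ) (k : ℕ) (l : NNReal × NNReal) : ℕ → ℝ × ℝ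
  | 0 => ((l.1 : ℝ), Real.exp (-(l.2 : ℝ)))
  | j+1 => estep B.a11 (hs B T k) (nu1 B k) (nu2 B k) (eul B T k l j)

lemma eul_good (B : BranchingMechanism) {T : ℝ} (hT : 0 ≤ T) (k j : ℕ) :
    Good (fun l => eul B T k l j) := by
  induction j with
  | zero => exact good_init
  | succ j ih =>
    have h0 := hs_nonneg B hT k
    have hb := hs_bd B hT k
    rw [mul_add] at hb
    refine good_step (nu1_ae B k) (nu2_ae B k) (nu1_fst B k) h0 ?_ ?_ ih
    · have := mul_le_mul_of_nonneg_left (le_abs_self (B.a11 + ∫ z, z.1 ∂(nu1 B k))) h0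
      have : 0 ≤ hs B T k * (nu2 B k).real univ := by positivity
      linarith
    · have : 0 ≤ hs B T k * |B.a11 + ∫ z, z.1 ∂(nu1 B k)| := by positivity
      linarith

lemma eul_conv (B : BranchingMechanism) {T : ℝ} (hT : 0 ≤ T) (l : NNReal × NNReal) {V : ℝ → ℝ × ℝ}
    (hV : SolvesCumulant B ((l.1 : ℝ), (l.2 : ℝ)) V) :
    Tendsto (fun k => dd (eul B T k l (ns B T k)) (tp (V T))) atTop (nhds 0) := by
  have ha := B.alpha_nonneg
  have hM := M1_nonneg B
  have hpc : ContinuousOn (fun t => tp (V t)) (Icc 0 T) := by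
    have : Continuous tp := by unfold tp; fun_prop
    exact this.comp_continuousOn (hV.1.mono Icc_subset_Ici_self)
  obtain ⟨C, hC⟩ := isCompact_Icc.exists_bound_of_continuousOn hpc
  set R := max C (((l.1:ℝ) + T * (M1 B + 2 * B.alpha)) * Real.exp (T * |B.a11|)) with hRdef
  have hreg : ∀ t, 0 ≤ t → t ≤ T → Reg R (tp (V t)) := by
    intro t h0 h1
    have hn := hV.2.1 t h0
    have hd := tp_mem hn.1 hn.2
    refine ⟨hd.1, ?_, hd.2⟩
    exact ((le_abs_self _).trans ((norm_fst_le _).trans (hC t ⟨h0, h1⟩))).trans (le_max_left _ _)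
  have hR : 0 ≤ R := le_max_of_le_right (by positivity)
  have hL := LL_nonneg B hR
  have huc := isCompact_Icc.uniformContinuousOn_of_continuous hpc
  rw [Metric.uniformContinuousOn_iff] at huc
  -- main bound
  have main : ∀ η > 0, ∀ᶠ k in atTop, dd (eul B T k l (ns B T k)) (tp (V T)) ≤
      2 * T * η * Real.exp (2 * LL B R * T) := by
    intro η hη
    obtain ⟨ρ, hρ, huc⟩ := huc (η / (4 * (LL B R + 1))) (by positivity)
    have hdl : Tendsto (fun k => T * dl k) atTop (nhds 0) := by simpa using dl_tendsto.const_mul T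
    filter_upwards [hdl.eventually (gt_mem_nhds hρ),
      (del_tendsto B R).eventually (gt_mem_nhds (half_pos hη))] with k hk1 hk2
    have hh := hs_nonneg B hT k
    have hhl := hs_le B hT k
    have hdist : ∀ s t, 0 ≤ t → t ≤ s → s ≤ T → s ≤ t + hs B T k →
        LL B R * dd (tp (V s)) (tp (V t)) ≤ η / 2 := by
      intro s t h0 h1 h2 h3
      have := huc s ⟨h0.trans h1, h2⟩ t ⟨h0, h1.trans h2⟩ (by
        rw [Real.dist_eq, abs_of_nonneg (by linarith)]; linarith)
      have b : dd (tp (V s)) (tp (V t)) ≤ 2 * (η / (4 * (LL B R + 1))) := by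
        rw [Prod.dist_eq, Real.dist_eq, Real.dist_eq] at this
        have i1 := (le_max_left _ _).trans_lt this
        have i2 := (le_max_right _ _).trans_lt this
        unfold dd; linarith
      calc _ ≤ (LL B R + 1) * (2 * (η / (4 * (LL B R + 1)))) := by
            have := dd_nonneg (tp (V s)) (tp (V t))
            gcongr; linarith
        _ = η / 2 := by field_simp; ring
    have := euler_conv (a := B.a11) (h := hs B T k) (L := LL B R) (M := M1 B + 2 * B.alpha) (R := R) (η := η)
      (E₁ := E1 B) (E₂ := E2 B) (ν1 := nu1 B k) (ν2 := nu2 B k) hh hL hη.le (by positivity)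
      (nu1_ae B k) (nu1_w1 B k) (nu1_int_w1 B k) (fun p p' h h' => D1_lip B k h h')
      (fun p p' h h' => D2_lip B k h h') (x := eul B T k l) (fun j => rfl)
      (fun j => ⟨(eul_good B hT k j).n1 l, (eul_good B hT k j).n2 l, (eul_good B hT k j).l2 l⟩)
      (p := fun t => tp (V t)) (ns B T k)
      (by rw [ns_hs]; exact le_max_right _ _)
      (by rw [ns_hs]; exact hreg)
      (by simp only [cumulant_zero hV]; rfl)
      (fun t ht => (tp_deriv hV ht).1) (fun t ht => (tp_deriv hV ht).2)
      (by
        rw [ns_hs]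
        intro s t h0 h1 h2 h3
        have r1 := hreg s (h0.trans h1) h2
        have r2 := hreg t h0 (h1.trans h2)
        have q1 := E1_lip B r1 r2
        have q2 := (D_approx B k r2).1
        have q3 := hdist s t h0 h1 h2 h3
        have := abs_sub_le (E1 B (tp (V s))) (E1 B (tp (V t))) (D1 B.a11 (nu1 B k) (tp (V t)))
        linarith)
      (by
        rw [ns_hs]
        intro s t h0 h1 h2 h3
        have r1 := hreg s (h0.trans h1) h2
        have r2 := hreg t h0 (h1.trans h2)
        have q1 := E2_lip B r1 r2
        have q2 := (D_approx B k r2).2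
        have q3 := hdist s t h0 h1 h2 h3
        have := abs_sub_le (E2 B (tp (V s))) (E2 B (tp (V t))) (D2 (nu2 B k) (tp (V t)))
        linarith)
    rw [ns_hs] at this
    exact this
  rw [Metric.tendsto_nhds]
  intro ε hε
  have hK : 0 < 2 * T * Real.exp (2 * LL B R * T) + 1 := by positivity
  filter_upwards [main (ε / (2 * T * Real.exp (2 * LL B R * T) + 1)) (by positivity)] with k hk
  rw [Real.dist_eq, sub_zero, abs_of_nonneg (dd_nonneg _ _)]
  refine hk.trans_lt ?_
  have : 2 * T * (ε / (2 * T * Real.exp (2 * LL B R * T) + 1)) * Real.exp (2 * LL B R * T)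
    = ε * ((2 * T * Real.exp (2 * LL B R * T)) / (2 * T * Real.exp (2 * LL B R * T) + 1)) := by ring
  rw [this]
  have : (2 * T * Real.exp (2 * LL B R * T)) / (2 * T * Real.exp (2 * LL B R * T) + 1) < 1 := by
    rw [div_lt_one hK]; linarith
  nlinarith

lemma V_PD (B : BranchingMechanism) {V : ℝ → (ℝ × ℝ) → ℝ × ℝ}
    (hV : ∀ l : ℝ × ℝ, 0 ≤ l.1 → 0 ≤ l.2 → SolvesCumulant B l (fun t => V t l)) {T : ℝ} (hT : 0 ≤ T) :
    (∀ c, 0 ≤ c → PD (fun l => Real.exp (-(c * (V T ((l.1 : ℝ), (l.2 : ℝ))).1)))) ∧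
    PD (fun l => Real.exp (-(V T ((l.1 : ℝ), (l.2 : ℝ))).2)) := by
  have hc := fun l : NNReal × NNReal => eul_conv B hT l (hV ((l.1 : ℝ), (l.2 : ℝ)) l.1.2 l.2.2)
  have h1 : ∀ l : NNReal × NNReal, Tendsto (fun k => (eul B T k l (ns B T k)).1) atTop
      (nhds (V T ((l.1 : ℝ), (l.2 : ℝ))).1) := by
    intro l
    rw [tendsto_iff_dist_tendsto_zero]
    refine squeeze_zero (fun _ => dist_nonneg) (fun k => ?_) (hc l)
    rw [Real.dist_eq]; unfold dd
    exact le_add_of_nonneg_right (abs_nonneg _)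
  have h2 : ∀ l : NNReal × NNReal, Tendsto (fun k => (eul B T k l (ns B T k)).2) atTop
      (nhds (Real.exp (-(V T ((l.1 : ℝ), (l.2 : ℝ))).2))) := by
    intro l
    rw [tendsto_iff_dist_tendsto_zero]
    refine squeeze_zero (fun _ => dist_nonneg) (fun k => ?_) (hc l)
    rw [Real.dist_eq]; unfold dd
    exact le_add_of_nonneg_left (abs_nonneg _)
  refine ⟨fun c hc => PD.limit (fun k => (eul_good B hT k (ns B T k)).e1 c hc) fun l => ?_,
    PD.limit (fun k => (eul_good B hT k (ns B T k)).e2) h2⟩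
  exact (Real.continuous_exp.tendsto _).comp ((h1 l).const_mul c).neg


def ph (x : ℝ) : ℝ := Real.exp (-x) - 1 + x
lemma ph_nonneg (x : ℝ) : 0 ≤ ph x := by unfold ph; linarith [Real.add_one_le_exp (-x)]
lemma ph_le {R x : ℝ} (hR : 0 ≤ R) (hx : -R ≤ x) : ph x ≤ Real.exp R * min |x| (x ^ 2) := by
  have eR : 1 ≤ Real.exp R := Real.one_le_exp hR
  unfold ph
  rcases le_or_gt 0 x with h | h
  · have h1 := exp_quad h
    have h2 : Real.exp (-x) ≤ 1 := by rw [Real.exp_le_one_iff]; linarith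
    have : 0 ≤ min |x| (x ^ 2) := le_min (abs_nonneg _) (by positivity)
    have : Real.exp (-x) - 1 + x ≤ min |x| (x ^ 2) := by
      refine le_min ?_ ?_
      · rw [abs_of_nonneg h]; linarith
      · nlinarith
    nlinarith
  · obtain ⟨y, rfl⟩ : ∃ y, x = -y := ⟨-x, by ring⟩
    have hy : 0 < y := by linarith
    have hyR : Real.exp y ≤ Real.exp R := Real.exp_le_exp.2 (by linarith)
    have h1 := Real.add_one_le_exp (-y)
    have e : Real.exp (-y) * Real.exp y = 1 := by rw [← Real.exp_add]; simp
    have p := Real.exp_pos y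
    have h2 : Real.exp y - 1 ≤ y * Real.exp y := by nlinarith
    rw [neg_neg, mul_min_of_nonneg _ _ (by positivity)]
    refine le_min ?_ ?_
    · rw [abs_neg, abs_of_pos hy]; nlinarith
    · have h3 := mul_le_mul_of_nonneg_left h2 hy.le
      have h4 : y ^ 2 * Real.exp y ≤ y ^ 2 * Real.exp R := by gcongr
      have h5 : Real.exp y - 1 - y ≤ y * (Real.exp y - 1) := by nlinarith
      nlinarith

lemma Mset_sub {z : ℝ × ℝ} (h : z ∈ Mset) : z ∈ Mm1set := by
  obtain ⟨h1, n, hn⟩ := h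
  exact ⟨h1, n, by have := Int.natCast_nonneg n; omega, by simpa using hn⟩

def fR (R ε : ℝ) (z : ℝ × ℝ) : ℝ := Real.exp R * min (R * w2 z) (ε * R ^ 2 * w2 z ^ 2)
lemma measurable_fR (R ε : ℝ) : Measurable (fR R ε) := by
  unfold fR
  have := measurable_w2
  fun_prop
lemma fR_nonneg {R ε : ℝ} (hR : 0 ≤ R) (he : 0 ≤ ε) {z : ℝ × ℝ} (hz : z ∈ Mm1set) : 0 ≤ fR R ε z := by
  have := w2_nonneg hz
  unfold fR
  exact mul_nonneg (Real.exp_nonneg _) (le_min (by positivity) (by positivity))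

lemma fR_mono {R ε : ℝ} (he : ε ≤ 1) (z : ℝ × ℝ) : fR R ε z ≤ fR R 1 z := by
  unfold fR
  gcongr

lemma ph_bd {R ε : ℝ} (hR : 0 ≤ R) (he0 : 0 ≤ ε) (he : ε ≤ 1) {v z : ℝ × ℝ} (h1 : 0 ≤ v.1) (h2 : 0 ≤ v.2)
    (h3 : v.1 ≤ ε * R) (h4 : v.2 ≤ ε * R) (hz : z ∈ Mm1set) :
    ph (v.1 * z.1 + v.2 * z.2) ≤ ε * fR R ε z := by
  have hw := w2_nonneg hz
  obtain ⟨hz1, n, hn, hz2⟩ := hz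
  have hz2' : -1 ≤ z.2 := by rw [hz2]; exact_mod_cast hn
  have hx1 : |v.1 * z.1 + v.2 * z.2| ≤ ε * R * w2 z := by
    refine (abs_add_le _ _).trans ?_
    rw [abs_mul, abs_mul, abs_of_nonneg h1, abs_of_nonneg h2, abs_of_nonneg hz1]
    unfold w2
    have := abs_nonneg z.2
    nlinarith [mul_le_mul_of_nonneg_right h3 hz1, mul_le_mul_of_nonneg_right h4 this]
  have hx2 : -R ≤ v.1 * z.1 + v.2 * z.2 := by nlinarith [mul_nonneg h1 hz1]
  refine (ph_le hR hx2).trans ?_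
  have : ε * fR R ε z = Real.exp R * (min (ε * R * w2 z) ((ε * R * w2 z) ^ 2)) := by
    unfold fR
    rw [mul_left_comm, mul_min_of_nonneg _ _ he0]
    ring_nf
  rw [this]
  rw [← sq_abs (v.1 * z.1 + v.2 * z.2)]
  gcongr

lemma fR_int2 (B : BranchingMechanism) (R : ℝ) (hR : 0 ≤ R) : Integrable (fR R 1) B.n2 := by
  refine ((w2_int B).const_mul (Real.exp R * R)).mono' (measurable_fR _ _).aestronglyMeasurable ?_
  filter_upwards [n2_ae B] with z hz
  rw [Real.norm_eq_abs, abs_of_nonneg (fR_nonneg hR zero_le_one hz)]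
  unfold fR
  rw [mul_assoc (Real.exp R)]
  exact mul_le_mul_of_nonneg_left (min_le_left _ _) (Real.exp_nonneg _)

lemma fR_int1 (B : BranchingMechanism) (R : ℝ) (hR : 0 ≤ R) : Integrable (fR R 1) B.n1 := by
  refine ((w1_int B).const_mul (Real.exp R * ((R + R ^ 2) * 2))).mono' (measurable_fR _ _).aestronglyMeasurable ?_
  filter_upwards [n1_ae B] with z hz
  rw [Real.norm_eq_abs, abs_of_nonneg (fR_nonneg hR zero_le_one (Mset_sub hz))]
  have hw := w1_nonneg hz
  unfold fR
  rw [mul_assoc (Real.exp R)]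
  refine mul_le_mul_of_nonneg_left ?_ (Real.exp_nonneg _)
  obtain ⟨h1, n, hn⟩ := hz
  have hw2 : w2 z = z.1 + n := by unfold w2; rw [hn]; simp
  have key : min (w2 z) (w2 z ^ 2) ≤ 2 * w1 z := by
    rw [hw2]
    unfold w1
    rw [hn]
    rcases Nat.eq_zero_or_pos n with h0 | h0
    · subst h0
      have : 0 ≤ min z.1 (z.1 ^ 2) := le_min h1 (by positivity)
      simp only [Nat.cast_zero, add_zero]; linarith
    · have : (1:ℝ) ≤ n := by exact_mod_cast h0
      refine (min_le_left _ _).trans ?_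
      rcases le_or_gt z.1 1 with h5 | h5
      · have : 0 ≤ min z.1 (z.1 ^ 2) := le_min h1 (by positivity)
        linarith
      · have : z.1 ≤ min z.1 (z.1 ^ 2) := le_min le_rfl (by nlinarith)
        linarith
  have hm : min (R * w2 z) (1 * R ^ 2 * w2 z ^ 2) ≤ (R + R ^ 2) * min (w2 z) (w2 z ^ 2) := by
    have hw0 : 0 ≤ w2 z := by rw [hw2]; positivity
    rw [mul_min_of_nonneg _ _ (by positivity)]
    refine min_le_min ?_ ?_
    · have : 0 ≤ R ^ 2 * w2 z := by positivity
      linarith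
    · have : 0 ≤ R * w2 z ^ 2 := by positivity
      linarith
  refine hm.trans ?_
  rw [mul_assoc]
  gcongr

lemma fR_int {n : Measure (ℝ × ℝ)} (hs : ∀ᵐ z ∂n, z ∈ Mm1set)
    (hf : ∀ R, 0 ≤ R → Integrable (fR R 1) n) {R ε : ℝ} (hR : 0 ≤ R) (h0 : 0 ≤ ε) (h1 : ε ≤ 1) :
    Integrable (fR R ε) n := by
  refine (hf R hR).mono' (measurable_fR _ _).aestronglyMeasurable ?_
  filter_upwards [hs] with z hz
  rw [Real.norm_eq_abs, abs_of_nonneg (fR_nonneg hR h0 hz)]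
  exact fR_mono h1 z

lemma ph_int {n : Measure (ℝ × ℝ)} (hs : ∀ᵐ z ∂n, z ∈ Mm1set)
    (hf : ∀ R, 0 ≤ R → Integrable (fR R 1) n) {v : ℝ × ℝ} (h1 : 0 ≤ v.1) (h2 : 0 ≤ v.2) :
    Integrable (fun z => ph (v.1 * z.1 + v.2 * z.2)) n := by
  refine (hf (v.1 + v.2) (by positivity)).mono' (by unfold ph; fun_prop) ?_
  filter_upwards [hs] with z hz
  rw [Real.norm_eq_abs, abs_of_nonneg (ph_nonneg _)]
  have := ph_bd (R := v.1 + v.2) (ε := 1) (by positivity) zero_le_one le_rfl h1 h2 (by linarith) (by linarith) hz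
  linarith

lemma ph_int_le {n : Measure (ℝ × ℝ)} (hs : ∀ᵐ z ∂n, z ∈ Mm1set)
    (hf : ∀ R, 0 ≤ R → Integrable (fR R 1) n) {R ε : ℝ} (hR : 0 ≤ R) (he0 : 0 ≤ ε) (he : ε ≤ 1)
    {v : ℝ × ℝ} (h1 : 0 ≤ v.1) (h2 : 0 ≤ v.2)
    (h3 : v.1 ≤ ε * R) (h4 : v.2 ≤ ε * R) :
    ∫ z, ph (v.1 * z.1 + v.2 * z.2) ∂n ≤ ε * ∫ z, fR R ε z ∂n := by
  rw [← integral_const_mul]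
  refine integral_mono_ae (ph_int hs hf h1 h2) ((fR_int hs hf hR he0 he).const_mul _) ?_
  filter_upwards [hs] with z hz using ph_bd hR he0 he h1 h2 h3 h4 hz

lemma fR_tendsto {n : Measure (ℝ × ℝ)} (hs : ∀ᵐ z ∂n, z ∈ Mm1set)
    (hf : ∀ R, 0 ≤ R → Integrable (fR R 1) n) {R : ℝ} (hR : 0 ≤ R) :
    Tendsto (fun k => ∫ z, fR R (dl k) z ∂n) atTop (nhds 0) := by
  have : Tendsto (fun k => ∫ z, fR R (dl k) z ∂n) atTop (nhds (∫ z, (0:ℝ) ∂n)) := by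
    refine tendsto_integral_of_dominated_convergence (fR R 1)
      (fun k => (measurable_fR _ _).aestronglyMeasurable) (hf R hR) ?_ ?_
    · intro k
      filter_upwards [hs] with z hz
      rw [Real.norm_eq_abs, abs_of_nonneg (fR_nonneg hR (dl_pos k).le hz)]
      exact fR_mono (dl_le k) z
    · filter_upwards [hs] with z hz
      have hc : Continuous (fun e => fR R e z) := by unfold fR; fun_prop
      have := (hc.tendsto 0).comp dl_tendsto
      have h0 : fR R 0 z = 0 := by
        have := w2_nonneg hz
        unfold fR
        simp only [zero_mul]
        rw [min_eq_right (by positivity), mul_zero]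
      rw [h0] at this
      exact this
  simpa using this

lemma n2_ae' (B : BranchingMechanism) : ∀ᵐ z ∂B.n1, z ∈ Mm1set := by
  filter_upwards [n1_ae B] with z hz using Mset_sub hz

def K1 (B : BranchingMechanism) : ℝ := ∫ z, z.2 ∂B.n1
def J1 (B : BranchingMechanism) : ℝ := ∫ z, z.1 ∂B.n2
def J2 (B : BranchingMechanism) : ℝ := ∫ z, z.2 ∂B.n2

lemma K1_int (B : BranchingMechanism) : Integrable (fun z => z.2) B.n1 := by
  refine (w1_int B).mono' (by fun_prop) ?_
  filter_upwards [n1_ae B] with z hz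
  obtain ⟨h1, n, hn⟩ := hz
  have : 0 ≤ min z.1 (z.1 ^ 2) := le_min h1 (by positivity)
  unfold w1
  rw [Real.norm_eq_abs, hn, Nat.abs_cast]; linarith
lemma J1_int (B : BranchingMechanism) : Integrable (fun z => z.1) B.n2 := by
  refine (w2_int B).mono' (by fun_prop) ?_
  filter_upwards [n2_ae B] with z hz
  unfold w2
  rw [Real.norm_eq_abs, abs_of_nonneg hz.1]; linarith [abs_nonneg z.2]
lemma J2_int (B : BranchingMechanism) : Integrable (fun z => z.2) B.n2 := by
  refine (w2_int B).mono' (by fun_prop) ?_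
  filter_upwards [n2_ae B] with z hz
  unfold w2
  rw [Real.norm_eq_abs]; linarith [hz.1]
lemma K1_nonneg (B : BranchingMechanism) : 0 ≤ K1 B := by
  refine integral_nonneg_of_ae ?_
  filter_upwards [n1_ae B] with z hz
  obtain ⟨h1, n, hn⟩ := hz
  rw [hn]; simp
lemma J1_nonneg (B : BranchingMechanism) : 0 ≤ J1 B := by
  refine integral_nonneg_of_ae ?_
  filter_upwards [n2_ae B] with z hz using hz.1

lemma mPhi1_lin (B : BranchingMechanism) {v : ℝ × ℝ} (h1 : 0 ≤ v.1) (h2 : 0 ≤ v.2) :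
    mPhi1 B v = -B.a11 * v.1 + v.2 * K1 B -
      (B.alpha * v.1 ^ 2 + ∫ z, ph (v.1 * z.1 + v.2 * z.2) ∂B.n1) := by
  have hi := ph_int (n2_ae' B) (fR_int1 B) h1 h2
  have : ∫ z, (Real.exp (-(v.1 * z.1 + v.2 * z.2)) - 1 + v.1 * z.1) ∂B.n1 =
      (∫ z, ph (v.1 * z.1 + v.2 * z.2) ∂B.n1) - v.2 * K1 B := by
    unfold K1
    rw [← integral_const_mul, ← integral_sub hi ((K1_int B).const_mul _)]
    congr 1; ext z; unfold ph; ring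
  unfold mPhi1
  rw [this]; ring

lemma lin2 (B : BranchingMechanism) (v : ℝ × ℝ) : 
    ∫ z, (z.1 * v.1 + z.2 * v.2) ∂B.n2 = J1 B * v.1 + J2 B * v.2 := by
  rw [integral_add ((J1_int B).mul_const _) ((J2_int B).mul_const _), integral_mul_const,
    integral_mul_const]; rfl

lemma mPhi2_lin (B : BranchingMechanism) {v : ℝ × ℝ} (h1 : 0 ≤ v.1) (h2 : 0 ≤ v.2) :
    mPhi2 B v = (B.a21 + J1 B) * v.1 + J2 B * v.2 - ∫ z, ph (v.1 * z.1 + v.2 * z.2) ∂B.n2 := by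
  have hi := ph_int (n2_ae B) (fR_int2 B) h1 h2
  have hl := lin2 B v
  have : ∫ z, (1 - Real.exp (-(v.1 * z.1 + v.2 * z.2))) ∂B.n2 =
      (∫ z, (z.1 * v.1 + z.2 * v.2) ∂B.n2) - (∫ z, ph (v.1 * z.1 + v.2 * z.2) ∂B.n2) := by
    have hi2 : Integrable (fun z : ℝ × ℝ => z.1 * v.1 + z.2 * v.2) B.n2 :=
      ((J1_int B).mul_const _).add ((J2_int B).mul_const _)
    rw [← integral_sub hi2 hi]
    congr 1; ext z; simp only [ph]; ring
  unfold mPhi2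
  rw [this, hl]; ring

def CC (B : BranchingMechanism) : ℝ := |B.a11| + K1 B + (B.a21 + J1 B) + |J2 B|

lemma V_growth {B : BranchingMechanism} {l : ℝ × ℝ} {V : ℝ → ℝ × ℝ} (hV : SolvesCumulant B l V)
    {t : ℝ} (ht : 0 ≤ t) : (V t).1 + (V t).2 ≤ (l.1 + l.2) * Real.exp (CC B * t) := by
  have hK := K1_nonneg B
  have hJ := J1_nonneg B
  have ha := B.a21_nonneg
  have hal := B.alpha_nonneg
  have hd : ∀ s, 0 ≤ s → HasDerivWithinAt (fun s => ((V s).1 + (V s).2) * Real.exp (-(CC B * s)))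
      ((mPhi1 B (V s) + mPhi2 B (V s)) * Real.exp (-(CC B * s)) +
        ((V s).1 + (V s).2) * (Real.exp (-(CC B * s)) * -(CC B * 1))) (Ici 0) s := by
    intro s hs
    obtain ⟨d1, d2⟩ := cumulant_deriv hV hs
    exact (d1.add d2).mul (((hasDerivWithinAt_id s (Ici 0)).const_mul (CC B)).neg.exp)
  have := image_le_of_deriv_right_le_deriv_boundary
    (f := fun s => ((V s).1 + (V s).2) * Real.exp (-(CC B * s))) (a := 0) (b := t)
    (B := fun _ => l.1 + l.2) (B' := fun _ => 0)
    (fun s hs => (hd s hs.1).continuousWithinAt.mono (fun r hr => hr.1))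
    (fun s hs => (hd s hs.1).mono (fun r hr => mem_Ici.2 (hs.1.trans hr)))
    (by simp [cumulant_zero hV]) continuousOn_const (fun s hs => hasDerivWithinAt_const _ _ _)
    (by
      intro s hs
      obtain ⟨v1, v2⟩ := hV.2.1 s hs.1
      have e1 := mPhi1_lin B v1 v2
      have e2 := mPhi2_lin B v1 v2
      have p1 : 0 ≤ ∫ z, ph ((V s).1 * z.1 + (V s).2 * z.2) ∂B.n1 := integral_nonneg fun z => ph_nonneg _
      have p2 : 0 ≤ ∫ z, ph ((V s).1 * z.1 + (V s).2 * z.2) ∂B.n2 := integral_nonneg fun z => ph_nonneg _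
      have p3 : 0 ≤ B.alpha * (V s).1 ^ 2 := by positivity
      have b1 : -B.a11 * (V s).1 ≤ |B.a11| * (V s).1 := mul_le_mul_of_nonneg_right (neg_le_abs _) v1
      have b2 : J2 B * (V s).2 ≤ |J2 B| * (V s).2 := mul_le_mul_of_nonneg_right (le_abs_self _) v2
      have b3 : 0 ≤ (K1 B + |J2 B|) * (V s).1 := by positivity
      have b4 : 0 ≤ (|B.a11| + (B.a21 + J1 B)) * (V s).2 := by positivity
      have : mPhi1 B (V s) + mPhi2 B (V s) - CC B * ((V s).1 + (V s).2) ≤ 0 := by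
        unfold CC; linarith
      have := mul_nonpos_of_nonpos_of_nonneg this (Real.exp_nonneg (-(CC B * s)))
      linarith) (x := t) ⟨ht, le_rfl⟩
  have e : Real.exp (-(CC B * t)) * Real.exp (CC B * t) = 1 := by rw [← Real.exp_add]; simp
  have := mul_le_mul_of_nonneg_right this (Real.exp_nonneg (CC B * t))
  rw [mul_assoc, e, mul_one] at this
  exact this

lemma V_zero {B : BranchingMechanism} {V : ℝ → ℝ × ℝ} (hV : SolvesCumulant B 0 V)
    {t : ℝ} (ht : 0 ≤ t) : V t = 0 := by
  have := V_growth hV ht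
  obtain ⟨v1, v2⟩ := hV.2.1 t ht
  simp at this
  exact Prod.ext (show (V t).1 = 0 by linarith) (show (V t).2 = 0 by linarith)

def AA (B : BranchingMechanism) : ℝ × ℝ →L[ℝ] ℝ × ℝ :=
  ((-B.a11) • ContinuousLinearMap.fst ℝ ℝ ℝ + K1 B • ContinuousLinearMap.snd ℝ ℝ ℝ).prod
  ((B.a21 + J1 B) • ContinuousLinearMap.fst ℝ ℝ ℝ + J2 B • ContinuousLinearMap.snd ℝ ℝ ℝ)

lemma AA_apply (B : BranchingMechanism) (v : ℝ × ℝ) :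
    AA B v = (-B.a11 * v.1 + K1 B * v.2, (B.a21 + J1 B) * v.1 + J2 B * v.2) := by
  simp [AA]

lemma V_deriv_limit {B : BranchingMechanism} {V : ℝ → (ℝ × ℝ) → ℝ × ℝ}
    (hV : ∀ l : ℝ × ℝ, 0 ≤ l.1 → 0 ≤ l.2 → SolvesCumulant B l (fun t => V t l))
    {π : ℝ → ℝ × ℝ} (hπ : SolvesMoment B (1, 1) π) {t : ℝ} (ht : 0 ≤ t) :
    Tendsto (fun k => (dl k)⁻¹ • V t (dl k, dl k)) atTop (nhds (π t)) := by
  have hal := B.alpha_nonneg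
  set R : ℝ := 2 * Real.exp (|CC B| * t) with hRd
  have hR : 0 ≤ R := by positivity
  have hVk := fun k => hV (dl k, dl k) (dl_pos k).le (dl_pos k).le
  have hb : ∀ k s, 0 ≤ s → s ≤ t → (V s (dl k, dl k)).1 + (V s (dl k, dl k)).2 ≤ dl k * R := by
    intro k s h0 h1
    refine (V_growth (hVk k) h0).trans ?_
    rw [hRd]
    have : Real.exp (CC B * s) ≤ Real.exp (|CC B| * t) := by
      apply Real.exp_le_exp.2
      exact (mul_le_mul_of_nonneg_right (le_abs_self _) h0).trans
        (mul_le_mul_of_nonneg_left h1 (abs_nonneg _))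
    have := mul_le_mul_of_nonneg_left this (dl_pos k).le
    dsimp only
    linarith
  let err : ℕ → ℝ := fun k => B.alpha * dl k * R ^ 2 + ∫ z, fR R (dl k) z ∂B.n1 + ∫ z, fR R (dl k) z ∂B.n2
  have herr : Tendsto err atTop (nhds 0) := by
    have := (((dl_tendsto.const_mul B.alpha).mul_const (R ^ 2)).add
      (fR_tendsto (n2_ae' B) (fR_int1 B) hR)).add (fR_tendsto (n2_ae B) (fR_int2 B) hR)
    simpa using this
  have hπd : ∀ s, 0 ≤ s → HasDerivWithinAt π (AA B (π s)) (Ici 0) s := by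
    intro s hs
    obtain ⟨d1, d2⟩ := hπ.2.2 s hs
    have := d1.prodMk d2
    refine this.congr_deriv ?_
    rw [AA_apply, lin2]
    ext <;> simp only [K1] <;> ring
  have bound : ∀ k, dist ((dl k)⁻¹ • V t (dl k, dl k)) (π t) ≤
      gronwallBound 0 ‖AA B‖₊ (err k + 0) (t - 0) := by
    intro k
    have d0 := dl_pos k
    have hWd : ∀ s, 0 ≤ s → HasDerivWithinAt (fun s => (dl k)⁻¹ • V s (dl k, dl k))
        ((dl k)⁻¹ • (mPhi1 B (V s (dl k, dl k)), mPhi2 B (V s (dl k, dl k)))) (Ici 0) s := by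
      intro s hs
      obtain ⟨d1, d2⟩ := cumulant_deriv (hVk k) hs
      exact (d1.prodMk d2).const_smul ((dl k)⁻¹)
    refine dist_le_of_approx_trajectories_ODE (v := fun _ => AA B) (a := 0) (b := t)
      (f := fun s => (dl k)⁻¹ • V s (dl k, dl k)) (g := π)
      (fun _ => (AA B).lipschitz)
      (fun s hs => (hWd s hs.1).continuousWithinAt.mono (fun r hr => hr.1))
      (fun s hs => (hWd s hs.1).mono (fun r hr => mem_Ici.2 (hs.1.trans hr))) ?_
      (fun s hs => (hπd s hs.1).continuousWithinAt.mono (fun r hr => hr.1))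
      (fun s hs => (hπd s hs.1).mono (fun r hr => mem_Ici.2 (hs.1.trans hr)))
      (fun s hs => (dist_self _).le) ?_ t ⟨ht, le_rfl⟩
    · intro s hs
      obtain ⟨v1, v2⟩ := (hVk k).2.1 s hs.1
      have hbs := hb k s hs.1 hs.2.le
      dsimp only at v1 v2 ⊢
      generalize V s (dl k, dl k) = v at v1 v2 hbs ⊢
      have c1 : v.1 ≤ dl k * R := by linarith
      have c2 : v.2 ≤ dl k * R := by linarith
      have p1 : 0 ≤ ∫ z, ph (v.1 * z.1 + v.2 * z.2) ∂B.n1 := integral_nonneg fun z => ph_nonneg _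
      have p2 : 0 ≤ ∫ z, ph (v.1 * z.1 + v.2 * z.2) ∂B.n2 := integral_nonneg fun z => ph_nonneg _
      have q1 := ph_int_le (n2_ae' B) (fR_int1 B) hR d0.le (dl_le k) v1 v2 c1 c2
      have q2 := ph_int_le (n2_ae B) (fR_int2 B) hR d0.le (dl_le k) v1 v2 c1 c2
      have f1 : 0 ≤ ∫ z, fR R (dl k) z ∂B.n1 := nonneg_of_mul_nonneg_right (p1.trans q1) d0
      have f2 : 0 ≤ ∫ z, fR R (dl k) z ∂B.n2 := nonneg_of_mul_nonneg_right (p2.trans q2) d0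
      have f3 : 0 ≤ B.alpha * dl k * R ^ 2 := by positivity
      rw [map_smul, dist_smul₀, AA_apply, mPhi1_lin B v1 v2, mPhi2_lin B v1 v2, Prod.dist_eq,
        Real.dist_eq, Real.dist_eq, Real.norm_eq_abs, abs_of_pos (inv_pos.2 d0)]
      rw [← div_eq_inv_mul, div_le_iff₀ d0]
      have g1 : B.alpha * v.1 ^ 2 ≤ B.alpha * (dl k * R) ^ 2 := by gcongr
      refine max_le ?_ ?_
      · rw [abs_le]
        simp only [err]
        constructor
        · nlinarith [mul_nonneg f2 d0.le]
        · have : 0 ≤ (B.alpha * dl k * R ^ 2 + ∫ z, fR R (dl k) z ∂B.n1 + ∫ z, fR R (dl k) z ∂B.n2) * dl k := by positivity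
          have : 0 ≤ B.alpha * v.1 ^ 2 := by positivity
          linarith
      · rw [abs_le]
        simp only [err]
        constructor
        · nlinarith [mul_nonneg f1 d0.le, mul_nonneg f3 d0.le]
        · have : 0 ≤ (B.alpha * dl k * R ^ 2 + ∫ z, fR R (dl k) z ∂B.n1 + ∫ z, fR R (dl k) z ∂B.n2) * dl k := by positivity
          linarith
    · have : V 0 (dl k, dl k) = (dl k, dl k) := cumulant_zero (hVk k)
      rw [this, hπ.1]
      simp [d0.ne']
  rw [tendsto_iff_dist_tendsto_zero]
  refine squeeze_zero (fun _ => dist_nonneg) bound ?_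
  have := ((gronwallBound_continuous_ε 0 ‖AA B‖₊ (t - 0)).tendsto 0).comp (by simpa using herr : Tendsto (fun k => err k + 0) atTop (nhds 0))
  rw [gronwallBound_ε0_δ0] at this
  exact this


lemma mon_add (l l' : NNReal × NNReal) : mon (l + l') = mon l * mon l' := by
  ext k
  simp only [mon_apply, ContinuousMap.mul_apply, Prod.fst_add, Prod.snd_add, NNReal.coe_add]
  rw [Real.rpow_add_of_nonneg k.1.2.1 (NNReal.coe_nonneg l.1) (NNReal.coe_nonneg l'.1), Real.rpow_add_of_nonneg k.2.2.1 (NNReal.coe_nonneg l.2) (NNReal.coe_nonneg l'.2)]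
  ring

def monS : Submonoid (BoundedContinuousFunction KK ℝ) where
  carrier := {g | ∃ l, ∀ k, g k = mon l k}
  one_mem' := ⟨0, fun k => by simp [mon_zero]⟩
  mul_mem' := by
    rintro f g ⟨l, hl⟩ ⟨l', hl'⟩
    exact ⟨l + l', fun k => by simp [mon_add, hl, hl']⟩

def monA : StarSubalgebra ℝ (BoundedContinuousFunction KK ℝ) :=
  { Algebra.adjoin ℝ (monS : Set (BoundedContinuousFunction KK ℝ)) with
    star_mem' := by
      intro a ha
      have : star a = a := by ext k; simp
      rw [this]; exact ha }

lemma KK_unique {μ ν : Measure KK} [IsFiniteMeasure μ] [IsFiniteMeasure ν]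
    (h : ∀ l, ∫ k, mon l k ∂μ = ∫ k, mon l k ∂ν) : μ = ν := by
  refine ext_of_forall_mem_subalgebra_integral_eq_of_polish (𝕜 := ℝ) (A := monA) ?_ ?_
  · intro x y hxy
    have mem : ∀ l, (fun k => mon l k) ∈ (fun f : C(KK, ℝ) => (f : KK → ℝ)) ''
        (monA.map (BoundedContinuousFunction.toContinuousMapStarₐ ℝ) : Set C(KK, ℝ)) := by
      intro l
      refine ⟨mon l, ⟨BoundedContinuousFunction.mkOfCompact (mon l), ?_, ?_⟩, rfl⟩
      · exact Algebra.subset_adjoin ⟨l, fun k => rfl⟩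
      · ext k; rfl
    by_cases h1 : x.1 = y.1
    · have h2 : x.2 ≠ y.2 := fun h2 => hxy (Prod.ext h1 h2)
      refine ⟨_, mem (0, 1), ?_⟩
      simp only [mon_apply]
      simpa using fun h => h2 (Subtype.ext h)
    · refine ⟨_, mem (1, 0), ?_⟩
      simp only [mon_apply]
      simpa using fun h => h1 (Subtype.ext h)
  · intro g hg0
    have hg : g ∈ Subalgebra.toSubmodule (Algebra.adjoin ℝ (monS : Set (BoundedContinuousFunction KK ℝ))) := hg0
    clear hg0
    rw [Algebra.adjoin_eq_span, Submonoid.closure_eq] at hg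
    induction hg using Submodule.span_induction with
    | mem x hx =>
      obtain ⟨l, hl⟩ := hx
      simp only [hl]; exact h l
    | zero => simp
    | add x y _ _ hx hy =>
      simp only [BoundedContinuousFunction.coe_add, Pi.add_apply]
      rw [integral_add (x.integrable _) (y.integrable _), integral_add (x.integrable _) (y.integrable _), hx, hy]
    | smul a x _ hx =>
      simp only [BoundedContinuousFunction.coe_smul]
      rw [integral_smul, integral_smul, hx]

/-- nonneg quadrant -/
def QQ : Set (ℝ × ℝ) := {y | 0 ≤ y.1 ∧ 0 ≤ y.2}

def toK (y : ℝ × ℝ) : KK := (projIcc 0 1 zero_le_one (Real.exp (-y.1)), projIcc 0 1 zero_le_one (Real.exp (-y.2)))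
def ofK (k : KK) : ℝ × ℝ := (-Real.log k.1, -Real.log k.2)
lemma measurable_toK : Measurable toK := by
  have : Continuous toK := by
    unfold toK
    have := continuous_projIcc (h := (zero_le_one : (0:ℝ) ≤ 1))
    fun_prop
  exact this.measurable
lemma measurable_ofK : Measurable ofK := by
  unfold ofK
  have h1 : Measurable (fun k : KK => (k.1 : ℝ)) := measurable_subtype_coe.comp measurable_fst
  have h2 : Measurable (fun k : KK => (k.2 : ℝ)) := measurable_subtype_coe.comp measurable_snd
  exact (Real.measurable_log.comp h1).neg.prodMk (Real.measurable_log.comp h2).neg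

lemma toK_val {y : ℝ × ℝ} (hy : y ∈ QQ) : ((toK y).1 : ℝ) = Real.exp (-y.1) ∧ ((toK y).2 : ℝ) = Real.exp (-y.2) := by
  obtain ⟨h1, h2⟩ := hy
  constructor
  · simp only [toK, coe_projIcc]
    rw [min_eq_right (by rw [Real.exp_le_one_iff]; linarith), max_eq_right (Real.exp_nonneg _)]
  · simp only [toK, coe_projIcc]
    rw [min_eq_right (by rw [Real.exp_le_one_iff]; linarith), max_eq_right (Real.exp_nonneg _)]

lemma ofK_toK {y : ℝ × ℝ} (hy : y ∈ QQ) : ofK (toK y) = y := by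
  obtain ⟨h1, h2⟩ := toK_val hy
  unfold ofK; rw [h1, h2]; simp

lemma mon_toK {y : ℝ × ℝ} (hy : y ∈ QQ) (l : NNReal × NNReal) :
    mon l (toK y) = Real.exp (-((l.1 : ℝ) * y.1 + l.2 * y.2)) := by
  obtain ⟨h1, h2⟩ := toK_val hy
  rw [mon_apply, h1, h2, ← Real.exp_mul, ← Real.exp_mul, ← Real.exp_add]
  ring_nf

lemma laplace_unique {μ ν : Measure (ℝ × ℝ)} [IsFiniteMeasure μ] [IsFiniteMeasure ν]
    (hμ : ∀ᵐ y ∂μ, y ∈ QQ) (hν : ∀ᵐ y ∂ν, y ∈ QQ)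
    (h : ∀ l : ℝ × ℝ, 0 ≤ l.1 → 0 ≤ l.2 → ∫ y, Real.exp (-(l.1 * y.1 + l.2 * y.2)) ∂μ =
      ∫ y, Real.exp (-(l.1 * y.1 + l.2 * y.2)) ∂ν) : μ = ν := by
  have inv : ∀ ρ : Measure (ℝ × ℝ), (∀ᵐ y ∂ρ, y ∈ QQ) → (ρ.map toK).map ofK = ρ := by
    intro ρ hρ
    rw [Measure.map_map measurable_ofK measurable_toK]
    have : ofK ∘ toK =ᵐ[ρ] id := by filter_upwards [hρ] with y hy using ofK_toK hy
    rw [Measure.map_congr this, Measure.map_id]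
  have int : ∀ ρ : Measure (ℝ × ℝ), (∀ᵐ y ∂ρ, y ∈ QQ) → ∀ l : NNReal × NNReal,
      ∫ k, mon l k ∂(ρ.map toK) = ∫ y, Real.exp (-((l.1:ℝ) * y.1 + l.2 * y.2)) ∂ρ := by
    intro ρ hρ l
    rw [integral_map measurable_toK.aemeasurable (mon l).continuous.aestronglyMeasurable]
    refine integral_congr_ae ?_
    filter_upwards [hρ] with y hy using mon_toK hy l
  have : μ.map toK = ν.map toK := by
    refine KK_unique fun l => ?_
    rw [int μ hμ, int ν hν]
    exact h ((l.1:ℝ), (l.2:ℝ)) l.1.2 l.2.2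
  rw [← inv μ hμ, ← inv ν hν, this]

lemma V_to_zero {B : BranchingMechanism} {V : ℝ → (ℝ × ℝ) → ℝ × ℝ}
    (hV : ∀ l : ℝ × ℝ, 0 ≤ l.1 → 0 ≤ l.2 → SolvesCumulant B l (fun t => V t l))
    {t : ℝ} (ht : 0 ≤ t) : Tendsto (fun k => V t (dl k, dl k)) atTop (nhds 0) := by
  have hub : Tendsto (fun k => (dl k + dl k) * Real.exp (CC B * t)) atTop (nhds 0) := by
    simpa using (dl_tendsto.add dl_tendsto).mul_const (Real.exp (CC B * t))
  have h1 := fun k => (hV (dl k, dl k) (dl_pos k).le (dl_pos k).le).2.1 t ht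
  have h2 := fun k => V_growth (hV (dl k, dl k) (dl_pos k).le (dl_pos k).le) ht
  have a : Tendsto (fun k => (V t (dl k, dl k)).1) atTop (nhds 0) :=
    squeeze_zero (fun k => (h1 k).1) (fun k => by
      have := h1 k; have := h2 k; dsimp only at *; linarith) hub
  have b : Tendsto (fun k => (V t (dl k, dl k)).2) atTop (nhds 0) :=
    squeeze_zero (fun k => (h1 k).2) (fun k => by
      have := h1 k; have := h2 k; dsimp only at *; linarith) hub
  exact a.prodMk_nhds b

lemma exists_Q {B : BranchingMechanism} {V : ℝ → (ℝ × ℝ) → ℝ × ℝ}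
    (hV : ∀ l : ℝ × ℝ, 0 ≤ l.1 → 0 ≤ l.2 → SolvesCumulant B l (fun t => V t l))
    {t : ℝ} (ht : 0 ≤ t) {a : ℝ × ℝ} (ha : a ∈ Mset) :
    ∃ Q : Measure (ℝ × ℝ), IsProbabilityMeasure Q ∧ (∀ᵐ y ∂Q, y ∈ QQ) ∧
      ∀ l : ℝ × ℝ, 0 ≤ l.1 → 0 ≤ l.2 → ∫ y, Real.exp (-(l.1 * y.1 + l.2 * y.2)) ∂Q =
        Real.exp (-(a.1 * (V t l).1 + a.2 * (V t l).2)) := by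
  obtain ⟨ha1, n, hn⟩ := ha
  obtain ⟨p1, p2⟩ := V_PD B hV ht
  obtain ⟨μ, hμ, hint⟩ := ((p1 a.1 ha1).mul (p2.pow n)).exists_measure
  have hf : ∀ l : NNReal × NNReal, ∫ k, mon l k ∂μ =
      Real.exp (-(a.1 * (V t ((l.1:ℝ), (l.2:ℝ))).1 + a.2 * (V t ((l.1:ℝ), (l.2:ℝ))).2)) := by
    intro l
    rw [hint l, ← Real.exp_nat_mul, ← Real.exp_add, hn]
    ring_nf
  have hmass : μ.real univ = 1 := by
    have := hf 0
    have z : V t (((0 : NNReal × NNReal).1 : ℝ), ((0 : NNReal × NNReal).2 : ℝ)) = 0 := by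
      exact V_zero (V := fun t => V t 0) (hV 0 le_rfl le_rfl) ht
    rw [z] at this
    simpa [mon_zero] using this
  have hprob : IsProbabilityMeasure μ := ⟨by
    rw [← ENNReal.toReal_eq_one_iff]; exact hmass⟩
  let G : Set KK := {k | (k.1 : ℝ) ≠ 0 ∧ (k.2 : ℝ) ≠ 0}
  have m1 : Measurable (fun k : KK => (k.1 : ℝ)) := measurable_subtype_coe.comp measurable_fst
  have m2 : Measurable (fun k : KK => (k.2 : ℝ)) := measurable_subtype_coe.comp measurable_snd
  have hG : MeasurableSet G :=
    ((m1 (measurableSet_singleton 0)).compl).inter ((m2 (measurableSet_singleton 0)).compl)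
  let ln : ℕ → NNReal := fun k => ⟨dl k, (dl_pos k).le⟩
  have lim1 : Tendsto (fun j => ∫ k, mon (ln j, ln j) k ∂μ) atTop (nhds 1) := by
    have h0 := V_to_zero hV ht
    have h1 : Tendsto (fun j => a.1 * (V t (dl j, dl j)).1 + a.2 * (V t (dl j, dl j)).2) atTop (nhds 0) := by
      have := (((continuous_fst.tendsto (0 : ℝ × ℝ)).comp h0).const_mul a.1).add
        (((continuous_snd.tendsto (0 : ℝ × ℝ)).comp h0).const_mul a.2)
      simpa using this
    have := (Real.continuous_exp.tendsto _).comp h1.neg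
    simp only [neg_zero, Real.exp_zero] at this
    refine this.congr fun j => ?_
    rw [hf]; rfl
  have lim2 : Tendsto (fun j => ∫ k, mon (ln j, ln j) k ∂μ) atTop (nhds (∫ k, G.indicator (fun _ => (1:ℝ)) k ∂μ)) := by
    refine tendsto_integral_of_dominated_convergence (fun _ => (1:ℝ))
      (fun j => (mon _).continuous.aestronglyMeasurable) (integrable_const _) ?_ ?_
    · intro j
      refine Eventually.of_forall fun k => ?_
      have q1 : (0:ℝ) ≤ (k.1:ℝ) ^ (ln j : ℝ) := Real.rpow_nonneg k.1.2.1 _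
      have q2 : (0:ℝ) ≤ (k.2:ℝ) ^ (ln j : ℝ) := Real.rpow_nonneg k.2.2.1 _
      have q3 : (k.1:ℝ) ^ (ln j : ℝ) ≤ 1 := Real.rpow_le_one k.1.2.1 k.1.2.2 (ln j).2
      have q4 : (k.2:ℝ) ^ (ln j : ℝ) ≤ 1 := Real.rpow_le_one k.2.2.1 k.2.2.2 (ln j).2
      rw [mon_apply, Real.norm_eq_abs, abs_of_nonneg (mul_nonneg q1 q2)]
      exact mul_le_one₀ q3 q2 q4
    · refine Eventually.of_forall fun k => ?_
      have hne : ∀ j, (dl j : ℝ) ≠ 0 := fun j => (dl_pos j).ne'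
      by_cases hk : k ∈ G
      · rw [indicator_of_mem hk]
        have t1 := (Real.continuous_const_rpow hk.1).tendsto 0 |>.comp dl_tendsto
        have t2 := (Real.continuous_const_rpow hk.2).tendsto 0 |>.comp dl_tendsto
        have := t1.mul t2
        simp only [Real.rpow_zero, mul_one] at this
        exact this
      · rw [indicator_of_notMem hk]
        refine tendsto_const_nhds.congr fun j => ?_
        rw [mon_apply]
        have : (k.1:ℝ) = 0 ∨ (k.2:ℝ) = 0 := by
          by_contra hh
          push Not at hh
          exact hk hh
        rcases this with h | h
        · rw [h]
          show 0 = (0:ℝ) ^ (dl j) * _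
          rw [Real.zero_rpow (hne j)]; simp
        · rw [h]
          show 0 = _ * (0:ℝ) ^ (dl j)
          rw [Real.zero_rpow (hne j)]; simp
  have hGm : μ.real G = 1 := by
    have := tendsto_nhds_unique lim2 lim1
    rwa [integral_indicator_const _ hG, smul_eq_mul, mul_one] at this
  have hGae : ∀ᵐ k ∂μ, k ∈ G := by
    rw [ae_iff]
    have : μ Gᶜ = 0 := by
      rw [prob_compl_eq_zero_iff hG, ← ENNReal.toReal_eq_one_iff]; exact hGm
    exact this
  refine ⟨μ.map ofK, Measure.isProbabilityMeasure_map measurable_ofK.aemeasurable, ?_, ?_⟩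
  · have hQm : MeasurableSet QQ :=
      (measurableSet_le measurable_const measurable_fst).inter (measurableSet_le measurable_const measurable_snd)
    refine (ae_map_iff measurable_ofK.aemeasurable hQm).2 ?_
    refine Eventually.of_forall fun k => ⟨?_, ?_⟩
    · exact neg_nonneg.2 (Real.log_nonpos k.1.2.1 k.1.2.2)
    · exact neg_nonneg.2 (Real.log_nonpos k.2.2.1 k.2.2.2)
  · intro l h1 h2
    rw [integral_map measurable_ofK.aemeasurable (by fun_prop)]
    have := hf (⟨l.1, h1⟩, ⟨l.2, h2⟩)
    refine Eq.trans ?_ this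
    refine integral_congr_ae ?_
    filter_upwards [hGae] with k hk
    have c1 : 0 < (k.1:ℝ) := lt_of_le_of_ne k.1.2.1 (Ne.symm hk.1)
    have c2 : 0 < (k.2:ℝ) := lt_of_le_of_ne k.2.2.1 (Ne.symm hk.2)
    rw [mon_apply, Real.rpow_def_of_pos c1, Real.rpow_def_of_pos c2, ← Real.exp_add]
    show Real.exp (-(l.1 * (-Real.log k.1) + l.2 * (-Real.log k.2))) =
      Real.exp (Real.log k.1 * l.1 + Real.log k.2 * l.2)
    ring_nf


lemma exp_lim {X : ℕ → ℝ} {c : ℝ} (h0 : ∀ k, 0 ≤ X k)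
    (h : Tendsto (fun k => X k / dl k) atTop (nhds c)) :
    Tendsto (fun k => (1 - Real.exp (-X k)) / dl k) atTop (nhds c) := by
  have lo : Tendsto (fun k => X k / dl k - (X k / dl k) ^ 2 * dl k / 2) atTop (nhds c) := by
    have := h.sub (((h.pow 2).mul dl_tendsto).div_const 2)
    simpa using this
  refine tendsto_of_tendsto_of_tendsto_of_le_of_le lo h (fun k => ?_) (fun k => ?_)
  · have hd := dl_pos k
    have := exp_quad (h0 k)
    have e : X k / dl k - (X k / dl k) ^ 2 * dl k / 2 = (X k - X k ^ 2 / 2) / dl k := by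
      field_simp
    dsimp only
    rw [e]
    refine div_le_div_of_nonneg_right ?_ hd.le
    linarith
  · have hd := dl_pos k
    have := Real.add_one_le_exp (-X k)
    dsimp only
    gcongr
    linarith

lemma pair_lim {B : BranchingMechanism} {V : ℝ → (ℝ × ℝ) → ℝ × ℝ}
    (hV : ∀ l : ℝ × ℝ, 0 ≤ l.1 → 0 ≤ l.2 → SolvesCumulant B l (fun t => V t l))
    {π : ℝ → ℝ × ℝ} (hπ : SolvesMoment B (1, 1) π)
    {t : ℝ} (ht : 0 ≤ t) {a : ℝ × ℝ} (ha : a ∈ QQ) :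
    Tendsto (fun k => (1 - Real.exp (-(a.1 * (V t (dl k, dl k)).1 + a.2 * (V t (dl k, dl k)).2))) / dl k)
      atTop (nhds (a.1 * (π t).1 + a.2 * (π t).2)) := by
  have h := V_deriv_limit hV hπ ht
  have l1 := ((continuous_fst.tendsto (π t)).comp h).const_mul a.1
  have l2 := ((continuous_snd.tendsto (π t)).comp h).const_mul a.2
  refine exp_lim (fun k => ?_) ((l1.add l2).congr fun k => ?_)
  · have := (hV (dl k, dl k) (dl_pos k).le (dl_pos k).le).2.1 t ht
    exact add_nonneg (mul_nonneg ha.1 this.1) (mul_nonneg ha.2 this.2)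
  · have hd := dl_pos k
    simp only [Function.comp, Prod.smul_fst, Prod.smul_snd, smul_eq_mul]
    field_simp

lemma Mset_QQ {a : ℝ × ℝ} (ha : a ∈ Mset) : a ∈ QQ := by
  obtain ⟨h, n, hn⟩ := ha
  exact ⟨h, by rw [hn]; positivity⟩

lemma int_lap {Q : Measure (ℝ × ℝ)} [IsFiniteMeasure Q] (hQ : ∀ᵐ y ∂Q, y ∈ QQ) {l : ℝ × ℝ}
    (h1 : 0 ≤ l.1) (h2 : 0 ≤ l.2) :
    Integrable (fun y : ℝ × ℝ => Real.exp (-(l.1 * y.1 + l.2 * y.2))) Q := by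
  refine Integrable.of_bound (by fun_prop) 1 ?_
  filter_upwards [hQ] with y hy
  rw [Real.norm_eq_abs, abs_of_pos (Real.exp_pos _), Real.exp_le_one_iff]
  have := mul_nonneg h1 hy.1
  have := mul_nonneg h2 hy.2
  linarith

lemma Q_moment {Q : Measure (ℝ × ℝ)} [IsProbabilityMeasure Q] (hQ : ∀ᵐ y ∂Q, y ∈ QQ)
    {X : ℕ → ℝ} {c : ℝ} (hX : Tendsto (fun k => (1 - X k) / dl k) atTop (nhds c))
    (hint : ∀ k, ∫ y, Real.exp (-(dl k * y.1 + dl k * y.2)) ∂Q = X k) :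
    ∫⁻ y, ENNReal.ofReal (y.1 + y.2) ∂Q ≤ ENNReal.ofReal c := by
  let F : ℕ → ℝ × ℝ → ENNReal := fun k y =>
    ENNReal.ofReal ((1 - Real.exp (-(dl k * y.1 + dl k * y.2))) / dl k)
  have hF : ∀ k, ∫⁻ y, F k y ∂Q = ENNReal.ofReal ((1 - X k) / dl k) := by
    intro k
    have hd := dl_pos k
    have i0 := int_lap hQ (l := (dl k, dl k)) hd.le hd.le
    have i1 : Integrable (fun y : ℝ × ℝ => (1 - Real.exp (-(dl k * y.1 + dl k * y.2))) / dl k) Q :=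
      ((integrable_const 1).sub i0).div_const _
    rw [← ofReal_integral_eq_lintegral_ofReal i1]
    · rw [integral_div, integral_sub (integrable_const 1) i0, hint k]
      simp
    · filter_upwards [hQ] with y hy
      refine div_nonneg ?_ hd.le
      rw [sub_nonneg, Real.exp_le_one_iff]
      have := mul_nonneg hd.le hy.1
      have := mul_nonneg hd.le hy.2
      linarith
  have e : ∫⁻ y, ENNReal.ofReal (y.1 + y.2) ∂Q = ∫⁻ y, liminf (fun k => F k y) atTop ∂Q := by
    refine lintegral_congr_ae ?_
    filter_upwards [hQ] with y hy
    refine (Tendsto.liminf_eq ?_).symm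
    refine (ENNReal.continuous_ofReal.tendsto _).comp (exp_lim (fun k => ?_) ?_)
    · have hd := dl_pos k
      exact add_nonneg (mul_nonneg hd.le hy.1) (mul_nonneg hd.le hy.2)
    · refine tendsto_const_nhds.congr fun k => ?_
      have hd := dl_pos k
      field_simp
  rw [e]
  refine (lintegral_liminf_le (fun k => by fun_prop)).trans ?_
  simp only [hF]
  exact ((ENNReal.continuous_ofReal.tendsto _).comp hX).liminf_eq.le

lemma L_one {Q : Measure (ℝ × ℝ)} [IsProbabilityMeasure Q] (hQ : ∀ᵐ y ∂Q, y ∈ QQ) :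
    Tendsto (fun k => ∫ y, Real.exp (-(dl k * y.1 + dl k * y.2)) ∂Q) atTop (nhds 1) := by
  have : (1:ℝ) = ∫ y : ℝ × ℝ, (1:ℝ) ∂Q := by simp
  rw [this]
  refine tendsto_integral_of_dominated_convergence (fun _ => (1:ℝ))
      (fun j => by fun_prop) (integrable_const _) ?_ ?_
  · intro k
    filter_upwards [hQ] with y hy
    have hd := dl_pos k
    rw [Real.norm_eq_abs, abs_of_pos (Real.exp_pos _), Real.exp_le_one_iff]
    have := mul_nonneg hd.le hy.1
    have := mul_nonneg hd.le hy.2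
    linarith
  · refine Eventually.of_forall fun y => ?_
    have h1 := ((dl_tendsto.mul_const y.1).add (dl_tendsto.mul_const y.2)).neg
    have := (Real.continuous_exp.tendsto _).comp h1
    simp only [zero_mul, add_zero, neg_zero, Real.exp_zero] at this
    exact this

lemma measurableSet_QQ : MeasurableSet QQ :=
  (measurableSet_le measurable_const measurable_fst).inter (measurableSet_le measurable_const measurable_snd)

lemma exp_contr {s r d : ℝ} (hs : 0 ≤ s) (hr : 0 ≤ r) (hd : 0 ≤ d) :
    |Real.exp (-(d * s)) - Real.exp (-(d * r))| ≤ d * |s - r| := by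
  wlog h : s ≤ r generalizing s r
  · rw [abs_sub_comm, abs_sub_comm s]
    exact this hr hs (le_of_not_ge h)
  have h1 : Real.exp (-(d * r)) ≤ Real.exp (-(d * s)) := by
    apply Real.exp_le_exp.2
    have := mul_le_mul_of_nonneg_left h hd
    linarith
  rw [abs_of_nonneg (by linarith), abs_of_nonpos (by linarith)]
  have e : Real.exp (-(d * r)) = Real.exp (-(d * s)) * Real.exp (-(d * (r - s))) := by
    rw [← Real.exp_add]; ring_nf
  have h2 := Real.add_one_le_exp (-(d * (r - s)))
  have h3 : Real.exp (-(d * s)) ≤ 1 := by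
    rw [Real.exp_le_one_iff]; have := mul_nonneg hd hs; linarith
  have h4 := Real.exp_pos (-(d * s))
  have h5 : 0 ≤ d * (r - s) := mul_nonneg hd (by linarith)
  rw [e]
  nlinarith

lemma lower_k {μ ν : Measure (ℝ × ℝ)} {Pc : Measure ((ℝ × ℝ) × (ℝ × ℝ))}
    (hc : IsCoupling Pc μ ν) (hμ : ∀ᵐ y ∂μ, y ∈ QQ) (hν : ∀ᵐ y ∂ν, y ∈ QQ)
    [IsFiniteMeasure μ] [IsFiniteMeasure ν] (k : ℕ) :
    ENNReal.ofReal |((∫ y, Real.exp (-(dl k * y.1 + dl k * y.2)) ∂μ) -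
      ∫ y, Real.exp (-(dl k * y.1 + dl k * y.2)) ∂ν) / dl k| ≤
      ∫⁻ w, ENNReal.ofReal (|w.1.1 - w.2.1| + |w.1.2 - w.2.2|) ∂Pc := by
  obtain ⟨hp, rfl, rfl⟩ := hc
  have hd := dl_pos k
  have a1 : ∀ᵐ w ∂Pc, w.1 ∈ QQ := (ae_map_iff measurable_fst.aemeasurable measurableSet_QQ).1 hμ
  have a2 : ∀ᵐ w ∂Pc, w.2 ∈ QQ := (ae_map_iff measurable_snd.aemeasurable measurableSet_QQ).1 hν
  have i1 := (integrable_map_measure (by fun_prop) measurable_fst.aemeasurable).1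
    (int_lap hμ (l := (dl k, dl k)) hd.le hd.le)
  have i2 := (integrable_map_measure (by fun_prop) measurable_snd.aemeasurable).1
    (int_lap hν (l := (dl k, dl k)) hd.le hd.le)
  rw [integral_map measurable_fst.aemeasurable (by fun_prop),
    integral_map measurable_snd.aemeasurable (by fun_prop)]
  have i1 : Integrable (fun x : (ℝ × ℝ) × (ℝ × ℝ) => Real.exp (-(dl k * x.1.1 + dl k * x.1.2))) Pc := i1
  have i2 : Integrable (fun x : (ℝ × ℝ) × (ℝ × ℝ) => Real.exp (-(dl k * x.2.1 + dl k * x.2.2))) Pc := i2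
  rw [← integral_sub i1 i2, ← integral_div, ← Real.norm_eq_abs, ofReal_norm]
  refine (enorm_integral_le_lintegral_enorm _).trans (lintegral_mono_ae ?_)
  filter_upwards [a1, a2] with w h1 h2
  rw [← ofReal_norm]
  refine ENNReal.ofReal_le_ofReal ?_
  rw [Real.norm_eq_abs, abs_div, abs_of_pos hd, div_le_iff₀ hd, ← mul_add, ← mul_add]
  refine (exp_contr (add_nonneg h1.1 h1.2) (add_nonneg h2.1 h2.2) hd.le).trans ?_
  rw [mul_comm]
  refine mul_le_mul_of_nonneg_right ?_ hd.le
  have : w.1.1 + w.1.2 - (w.2.1 + w.2.2) = (w.1.1 - w.2.1) + (w.1.2 - w.2.2) := by ring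
  rw [this]
  exact abs_add_le _ _

/-- convolution with the Laplace transforms multiplying -/
lemma conv_lap {μ ν ρ : Measure (ℝ × ℝ)} [IsProbabilityMeasure μ] [IsProbabilityMeasure ν]
    [IsProbabilityMeasure ρ]
    (hμ : ∀ᵐ y ∂μ, y ∈ QQ) (hν : ∀ᵐ y ∂ν, y ∈ QQ) (hρ : ∀ᵐ y ∂ρ, y ∈ QQ)
    (h : ∀ l : ℝ × ℝ, 0 ≤ l.1 → 0 ≤ l.2 → ∫ y, Real.exp (-(l.1 * y.1 + l.2 * y.2)) ∂ρ =
      (∫ y, Real.exp (-(l.1 * y.1 + l.2 * y.2)) ∂μ) * ∫ y, Real.exp (-(l.1 * y.1 + l.2 * y.2)) ∂ν) :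
    (μ.prod ν).map (fun w => w.1 + w.2) = ρ := by
  have hm : Measurable (fun w : (ℝ × ℝ) × (ℝ × ℝ) => w.1 + w.2) := by fun_prop
  have : IsProbabilityMeasure ((μ.prod ν).map (fun w => w.1 + w.2)) :=
    Measure.isProbabilityMeasure_map hm.aemeasurable
  refine laplace_unique ?_ hρ fun l h1 h2 => ?_
  · refine (ae_map_iff hm.aemeasurable measurableSet_QQ).2 ?_
    filter_upwards [Measure.quasiMeasurePreserving_fst.ae hμ, Measure.quasiMeasurePreserving_snd.ae hν] with w a b
    exact ⟨add_nonneg a.1 b.1, add_nonneg a.2 b.2⟩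
  · rw [integral_map hm.aemeasurable (by fun_prop), h l h1 h2, ← integral_prod_mul]
    congr 1; ext w
    rw [← Real.exp_add, Prod.fst_add, Prod.snd_add]
    ring_nf

lemma map_prod3 {μ ν ρ : Measure (ℝ × ℝ)} [IsProbabilityMeasure μ] [IsProbabilityMeasure ν]
    [IsProbabilityMeasure ρ] :
    (((μ.prod (ν.prod ρ)).map (fun w => (w.1 + w.2.1, w.1 + w.2.2))).map Prod.fst
      = (μ.prod ν).map (fun w => w.1 + w.2)) ∧
    (((μ.prod (ν.prod ρ)).map (fun w => (w.1 + w.2.1, w.1 + w.2.2))).map Prod.snd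
      = (μ.prod ρ).map (fun w => w.1 + w.2)) := by
  have m1 : (μ.prod (ν.prod ρ)).map (Prod.map id Prod.fst) = μ.prod ν := by
    rw [← Measure.map_prod_map _ _ measurable_id measurable_fst, Measure.map_id, Measure.map_fst_prod]
    simp
  have m2 : (μ.prod (ν.prod ρ)).map (Prod.map id Prod.snd) = μ.prod ρ := by
    rw [← Measure.map_prod_map _ _ measurable_id measurable_snd, Measure.map_id, Measure.map_snd_prod]
    simp
  rw [← m1, ← m2, Measure.map_map (by fun_prop) (by fun_prop), Measure.map_map (by fun_prop) (by fun_prop),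
    Measure.map_map (by fun_prop) (by fun_prop), Measure.map_map (by fun_prop) (by fun_prop)]
  exact ⟨rfl, rfl⟩

lemma cost3 {μ ν ρ : Measure (ℝ × ℝ)} [IsProbabilityMeasure μ] [IsProbabilityMeasure ν]
    [IsProbabilityMeasure ρ] (hν : ∀ᵐ y ∂ν, y ∈ QQ) (hρ : ∀ᵐ y ∂ρ, y ∈ QQ) :
    ∫⁻ w, ENNReal.ofReal (|w.1.1 - w.2.1| + |w.1.2 - w.2.2|)
      ∂((μ.prod (ν.prod ρ)).map (fun w => (w.1 + w.2.1, w.1 + w.2.2))) ≤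
    (∫⁻ y, ENNReal.ofReal (y.1 + y.2) ∂ν) + ∫⁻ y, ENNReal.ofReal (y.1 + y.2) ∂ρ := by
  rw [lintegral_map (by fun_prop) (by fun_prop)]
  have q2 : Measure.QuasiMeasurePreserving (fun w : (ℝ × ℝ) × (ℝ × ℝ) × (ℝ × ℝ) => w.2.1)
      (μ.prod (ν.prod ρ)) ν := Measure.quasiMeasurePreserving_fst.comp Measure.quasiMeasurePreserving_snd
  have q3 : Measure.QuasiMeasurePreserving (fun w : (ℝ × ℝ) × (ℝ × ℝ) × (ℝ × ℝ) => w.2.2)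
      (μ.prod (ν.prod ρ)) ρ := Measure.quasiMeasurePreserving_snd.comp Measure.quasiMeasurePreserving_snd
  have e2 : (μ.prod (ν.prod ρ)).map (fun w => w.2.1) = ν := by
    have : (fun w : (ℝ × ℝ) × (ℝ × ℝ) × (ℝ × ℝ) => w.2.1) = Prod.fst ∘ Prod.snd := rfl
    rw [this, ← Measure.map_map measurable_fst measurable_snd, Measure.map_snd_prod]
    simp
  have e3 : (μ.prod (ν.prod ρ)).map (fun w => w.2.2) = ρ := by
    have : (fun w : (ℝ × ℝ) × (ℝ × ℝ) × (ℝ × ℝ) => w.2.2) = Prod.snd ∘ Prod.snd := rfl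
    rw [this, ← Measure.map_map measurable_snd measurable_snd, Measure.map_snd_prod]
    simp
  have f2 : ∫⁻ y, ENNReal.ofReal (y.1 + y.2) ∂ν =
      ∫⁻ w, ENNReal.ofReal (w.2.1.1 + w.2.1.2) ∂(μ.prod (ν.prod ρ)) := by
    conv_lhs => rw [← e2]
    rw [lintegral_map (by fun_prop) (by fun_prop)]
  have f3 : ∫⁻ y, ENNReal.ofReal (y.1 + y.2) ∂ρ =
      ∫⁻ w, ENNReal.ofReal (w.2.2.1 + w.2.2.2) ∂(μ.prod (ν.prod ρ)) := by
    conv_lhs => rw [← e3]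
    rw [lintegral_map (by fun_prop) (by fun_prop)]
  rw [f2, f3, ← lintegral_add_left (by fun_prop)]
  refine lintegral_mono_ae ?_
  filter_upwards [q2.ae hν, q3.ae hρ] with w a b
  rw [← ENNReal.ofReal_add (add_nonneg a.1 a.2) (add_nonneg b.1 b.2)]
  refine ENNReal.ofReal_le_ofReal ?_
  simp only [Prod.fst_add, Prod.snd_add, add_sub_add_left_eq_sub]
  have c1 := abs_sub_le_iff.2 (⟨by linarith [b.1], by linarith [a.1]⟩ :
    w.2.1.1 - w.2.2.1 ≤ w.2.1.1 + w.2.2.1 ∧ w.2.2.1 - w.2.1.1 ≤ w.2.1.1 + w.2.2.1)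
  have c2 := abs_sub_le_iff.2 (⟨by linarith [b.2], by linarith [a.2]⟩ :
    w.2.1.2 - w.2.2.2 ≤ w.2.1.2 + w.2.2.2 ∧ w.2.2.2 - w.2.1.2 ≤ w.2.1.2 + w.2.2.2)
  linarith

lemma min_decomp {x y : ℝ × ℝ} (hx : x ∈ Mset) (hy : y ∈ Mset) :
    ∃ w p q : ℝ × ℝ, w ∈ Mset ∧ p ∈ Mset ∧ q ∈ Mset ∧ x = w + p ∧ y = w + q ∧
      p.1 + q.1 = |x.1 - y.1| ∧ p.2 + q.2 = |x.2 - y.2| := by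
  obtain ⟨x1, x2⟩ := x
  obtain ⟨y1, y2⟩ := y
  obtain ⟨hx, n, hn⟩ := hx
  obtain ⟨hy, m, hm⟩ := hy
  simp only at hx hy hn hm
  subst hn hm
  refine ⟨(min x1 y1, ((min n m : ℕ) : ℝ)), (x1 - min x1 y1, ((n - min n m : ℕ) : ℝ)),
    (y1 - min x1 y1, ((m - min n m : ℕ) : ℝ)), ⟨le_min hx hy, _, rfl⟩,
    ⟨sub_nonneg.2 (min_le_left _ _), _, rfl⟩, ⟨sub_nonneg.2 (min_le_right _ _), _, rfl⟩, ?_, ?_, ?_, ?_⟩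
  · ext
    · simp
    · simp only [Prod.mk_add_mk]
      rw [← Nat.cast_add, Nat.add_sub_cancel' (min_le_left _ _)]
  · ext
    · simp
    · simp only [Prod.mk_add_mk]
      rw [← Nat.cast_add, Nat.add_sub_cancel' (min_le_right _ _)]
  · rcases le_total x1 y1 with h | h
    · simp only [min_eq_left h]; rw [abs_of_nonpos (by linarith)]; ring
    · simp only [min_eq_right h]; rw [abs_of_nonneg (by linarith)]; ring
  · rcases le_total n m with h | h
    · have h' : (n : ℝ) ≤ m := by exact_mod_cast h
      simp only [min_eq_left h]; rw [abs_of_nonpos (by linarith), Nat.cast_sub h]; simp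
    · have h' : (m : ℝ) ≤ n := by exact_mod_cast h
      simp only [min_eq_right h]; rw [abs_of_nonneg (by linarith), Nat.cast_sub h]; simp

/-- Coupling bounds for the `L¹`-Wasserstein distance between
`P^γ_t(x,·)` and `P^γ_t(y,·)` for the MSBI-process, assuming the first moment of
the immigration measure is finite. -/
theorem wasserstein_bounds_MSBI (B : BranchingMechanism)
    (V : ℝ → (ℝ × ℝ) → ℝ × ℝ)
    (hV : ∀ l : ℝ × ℝ, 0 ≤ l.1 → 0 ≤ l.2 → SolvesCumulant B l (fun t => V t l))
    (b : ℝ) (hb : 0 < b) (m : Measure (ℝ × ℝ))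
    (hm : IsImmigrationMeasure m)
    -- `∫ (z₁ + z₂) m(dz) < ∞`
    (hm_moment : ∫⁻ z, ENNReal.ofReal (z.1 + z.2) ∂m ≠ ⊤)
    (P : ℝ → (ℝ × ℝ) → Measure (ℝ × ℝ))
    (hP : IsMSBITransition V b m P)
    (π : ℝ → ℝ × ℝ) (hπ : SolvesMoment B (1, 1) π) :
    ∀ t : ℝ, 0 ≤ t → ∀ x ∈ Mset, ∀ y ∈ Mset,
      -- (i) lower bound for every coupling
      (∀ Pc : Measure ((ℝ × ℝ) × (ℝ × ℝ)), IsCoupling Pc (P t x) (P t y) →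
        ENNReal.ofReal |(x.1 - y.1) * (π t).1 + (x.2 - y.2) * (π t).2|
          ≤ ∫⁻ w, ENNReal.ofReal (|w.1.1 - w.2.1| + |w.1.2 - w.2.2|) ∂Pc) ∧
      -- (ii) upper bound for some coupling
      (∃ Pc : Measure ((ℝ × ℝ) × (ℝ × ℝ)), IsCoupling Pc (P t x) (P t y) ∧
        ∫⁻ w, ENNReal.ofReal (|w.1.1 - w.2.1| + |w.1.2 - w.2.2|) ∂Pc
          ≤ ENNReal.ofReal (|x.1 - y.1| * (π t).1 + |x.2 - y.2| * (π t).2)) := by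
  intro t ht x hx y hy
  have hsup : ∀ z ∈ Mset, ∀ᵐ u ∂(P t z), u ∈ QQ := by
    intro z hz
    have h0 : ∀ᵐ u ∂(P t z), u ∈ Mset := (hP t ht z hz).2.1
    filter_upwards [h0] with u hu using Mset_QQ hu
  constructor
  · intro Pc hc
    have := (hP t ht x hx).1
    have := (hP t ht y hy).1
    have z0 : (0 : ℝ × ℝ) ∈ Mset := ⟨le_rfl, 0, by simp⟩
    have := (hP t ht 0 z0).1
    have hk := lower_k hc (hsup x hx) (hsup y hy)
    have l0 := L_one (hsup 0 z0)
    have lx := pair_lim hV hπ ht (Mset_QQ hx)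
    have ly := pair_lim hV hπ ht (Mset_QQ hy)
    have lim := ((l0.mul (ly.sub lx))).abs
    have lim2 := (ENNReal.continuous_ofReal.tendsto _).comp lim
    have e : |(x.1 - y.1) * (π t).1 + (x.2 - y.2) * (π t).2| =
        |1 * (y.1 * (π t).1 + y.2 * (π t).2 - (x.1 * (π t).1 + x.2 * (π t).2))| := by
      rw [← abs_neg]; ring_nf
    rw [e]
    refine le_of_tendsto' lim2 fun k => ?_
    refine le_trans (le_of_eq ?_) (hk k)
    have hd := dl_pos k
    have Lx := (hP t ht x hx).2.2 (dl k, dl k) hd.le hd.le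
    have Ly := (hP t ht y hy).2.2 (dl k, dl k) hd.le hd.le
    have L0 := (hP t ht 0 z0).2.2 (dl k, dl k) hd.le hd.le
    simp only [Function.comp]
    dsimp only at Lx Ly L0
    rw [Lx, Ly, L0]
    congr 2
    simp only [sub_eq_add_neg, Real.exp_add, Prod.fst_zero, Prod.snd_zero]
    simp only [zero_mul, add_zero, neg_zero, Real.exp_zero, one_mul]
    ring
  · obtain ⟨w, p, q, hw, hp, hq, rfl, rfl, e1, e2⟩ := min_decomp hx hy
    obtain ⟨Q, hQ1, hQ2, hQ3⟩ := exists_Q hV ht hp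
    obtain ⟨Q', hQ1', hQ2', hQ3'⟩ := exists_Q hV ht hq
    have i1 := (hP t ht _ hx).1
    have i2 := (hP t ht _ hy).1
    have i3 := (hP t ht w hw).1
    refine ⟨((P t w).prod (Q.prod Q')).map (fun w => (w.1 + w.2.1, w.1 + w.2.2)),
      ⟨Measure.isProbabilityMeasure_map (by fun_prop), ?_, ?_⟩, ?_⟩
    · rw [map_prod3.1]
      refine conv_lap (hsup w hw) hQ2 (hsup _ hx) fun l h1 h2 => ?_
      rw [(hP t ht _ hx).2.2 l h1 h2, (hP t ht w hw).2.2 l h1 h2, hQ3 l h1 h2, ← Real.exp_add]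
      simp only [Prod.fst_add, Prod.snd_add]
      ring_nf
    · rw [map_prod3.2]
      refine conv_lap (hsup w hw) hQ2' (hsup _ hy) fun l h1 h2 => ?_
      rw [(hP t ht _ hy).2.2 l h1 h2, (hP t ht w hw).2.2 l h1 h2, hQ3' l h1 h2, ← Real.exp_add]
      simp only [Prod.fst_add, Prod.snd_add]
      ring_nf
    · refine (cost3 hQ2 hQ2').trans ?_
      have b1 := Q_moment hQ2 (pair_lim hV hπ ht (Mset_QQ hp))
        (fun k => hQ3 (dl k, dl k) (dl_pos k).le (dl_pos k).le)
      have b2 := Q_moment hQ2' (pair_lim hV hπ ht (Mset_QQ hq))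
        (fun k => hQ3' (dl k, dl k) (dl_pos k).le (dl_pos k).le)
      refine (add_le_add b1 b2).trans ?_
      have hπ0 := hπ.2.1 t ht
      have hp' := Mset_QQ hp
      have hq' := Mset_QQ hq
      rw [← ENNReal.ofReal_add (add_nonneg (mul_nonneg hp'.1 hπ0.1) (mul_nonneg hp'.2 hπ0.2))
        (add_nonneg (mul_nonneg hq'.1 hπ0.1) (mul_nonneg hq'.2 hπ0.2)), ← e1, ← e2]
      refine ENNReal.ofReal_le_ofReal (le_of_eq ?_)
      ring
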